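/- arXiv:2510.13340 — 3 statements merged into one kernel-verified Lean document; each statement's English description precedes it below -/
import Mathlib

section
/- Let s ∈ (0,1) and let f be the meromorphic function f(β) = [Γ(β+1) sin(πs) / (Γ(β−2s+1) sin(π(β−2s)))] · ( sin(π(β−s))/sin(πs) + Γ(2s−β) Γ(β+1)/Γ(2s) ). Then: (i) if s ≤ 1/2, there exists α > 0 such that f has no zeros in the strip {β ∈ ℂ : 0 < Re β < 2s + α}, and f has at least one zero in the strip {β ∈ ℂ : 2s < Re β < 2s + 1/2}; (ii) if s ≥ 1/2, there exists α > 0 such that f has no zeros in the strip {β ∈ ℂ : 2s − 1 < Re β < s + 1/2 + α}, and f has at least one zero in the strip {β ∈ ℂ : s + 1/2 < Re β < s + 1}. -/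
/-!
STATEMENT 3: location of the zeros of the Mellin symbol
f(β) = [Γ(β+1) sin(πs)/(Γ(β−2s+1) sin(π(β−2s)))] ·
       ( sin(π(β−s))/sin(πs) + Γ(2s−β)Γ(β+1)/Γ(2s) ).
A zero of f is a point where f is defined (not a pole, i.e. the formula defines an
analytic function there) and vanishes.
(i) If s ≤ 1/2: no zeros in {0 < Re β < 2s + α} for some α > 0, and at least one zero
    in {2s < Re β < 2s + 1/2}.
(ii) If s ≥ 1/2: no zeros in {2s − 1 < Re β < s + 1/2 + α} for some α > 0, and at least
    one zero in {s + 1/2 < Re β < s + 1}.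
-/

noncomputable def fNeumann (s : ℝ) (β : ℂ) : ℂ :=
  Complex.Gamma (β + 1) * Complex.sin (Real.pi * s) /
      (Complex.Gamma (β - 2 * s + 1) * Complex.sin (Real.pi * (β - 2 * s))) *
    (Complex.sin (Real.pi * (β - s)) / Complex.sin (Real.pi * s) +
      Complex.Gamma (2 * s - β) * Complex.Gamma (β + 1) / Complex.Gamma (2 * s))

/-- `β` is a zero of `F` : `F` is defined (not a pole, i.e. analytic) at `β` and vanishes. -/
def IsZeroOf (F : ℂ → ℂ) (β : ℂ) : Prop := AnalyticAt ℂ F β ∧ F β = 0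

/-!
By the reflection formula, `fNeumann s β` is a nonzero multiple of `E(w) - E(σ - 1)` away from
the poles, where `σ = s + 1/2`, `w = β - s + 1/2` and `E(w) = cos (πw) / (Γ(σ - w) Γ(σ + w))` is an
even entire function, real on the real axis. In the strips under consideration the zeros are
therefore the solutions of `E(w) = E(σ - 1)`, a positive number.

For fixed `Im w > 0` the argument of `1 / E(w)` increases strictly with `Re w`, from `0` on the
imaginary axis. It stays below `2π` for `Re w ≤ 1`, so there `E(w)` is positive only on the two
axes, and on the real interval `|σ - 1| < w ≤ min σ 1` it stays below `E(σ - 1)`. Since `|E|` blows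
up at the ends of vertical strips, the solutions in a closed strip form a compact set, which
widens the zero-free region to the right.

Between `Re w = min σ 1` and `Re w = min σ 1 + 1/2` the argument crosses `2π`, which gives a
curve, with exactly one point at each height, along which `E` is positive and tends to `+∞`. Near
the real axis `E` is either below `E(σ - 1)` on the curve, or it reaches that value on the real
axis itself, and the intermediate value theorem yields a solution in both cases.
-/

namespace NeumannSymbol

open Complex Filter Set Topology
open scoped Real ComplexConjugate

section ArgCoeAngle

lemma arg_prod_coe_angle {ι : Type*} (s : Finset ι) {f : ι → ℂ} (hf : ∀ i ∈ s, f i ≠ 0) :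
    (arg (∏ i ∈ s, f i) : Real.Angle) = ∑ i ∈ s, (arg (f i) : Real.Angle) := by
  induction s using Finset.cons_induction with
  | empty => simp
  | cons a s ha ih =>
    rw [Finset.forall_mem_cons] at hf
    rw [Finset.prod_cons, Finset.sum_cons, ← ih hf.2,
      arg_mul_coe_angle hf.1 (Finset.prod_ne_zero_iff.2 hf.2)]

lemma arg_exp_coe_angle (z : ℂ) : (arg (exp z) : Real.Angle) = z.im := by
  rw [arg_exp, Real.Angle.coe_toIocMod]

lemma re_eq_norm_mul_cos_of_arg_coe_angle_eq {z : ℂ} {φ : ℝ} (h : (arg z : Real.Angle) = φ) :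
    z.re = ‖z‖ * Real.cos φ := by
  rw [← Real.Angle.cos_coe, ← h, Real.Angle.cos_coe, norm_mul_cos_arg]

lemma im_eq_norm_mul_sin_of_arg_coe_angle_eq {z : ℂ} {φ : ℝ} (h : (arg z : Real.Angle) = φ) :
    z.im = ‖z‖ * Real.sin φ := by
  rw [← Real.Angle.sin_coe, ← h, Real.Angle.sin_coe, norm_mul_sin_arg]

end ArgCoeAngle

section ArgLine

lemma arg_eq_pi_div_two_sub_arctan {z : ℂ} (hz : 0 < z.im) :
    arg z = π / 2 - Real.arctan (z.re / z.im) := by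
  have hnorm : ‖z‖ = z.im * √(1 + (z.re / z.im) ^ 2) := by
    rw [norm_eq_sqrt_sq_add_sq, ← Real.sqrt_sq hz.le, ← Real.sqrt_mul (sq_nonneg _),
      Real.sqrt_sq hz.le]
    congr 1
    field
  rw [arg_of_im_pos hz, Real.arccos, Real.arctan_eq_arcsin, hnorm, div_div]

/-- The argument of the point with abscissa `t` on the horizontal line at height `y`. -/
noncomputable def argLine (y t : ℝ) : ℝ := arg (t + y * I)

variable {y : ℝ}

lemma argLine_eq (hy : 0 < y) (t : ℝ) : argLine y t = π / 2 - Real.arctan (t / y) := by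
  simpa [argLine] using arg_eq_pi_div_two_sub_arctan (z := t + y * I) (by simpa)

lemma argLine_strictAnti (hy : 0 < y) : StrictAnti (argLine y) := fun a b hab => by
  have := Real.arctan_strictMono (div_lt_div_of_pos_right hab hy)
  rw [argLine_eq hy, argLine_eq hy]
  linarith

lemma argLine_pos (hy : 0 < y) (t : ℝ) : 0 < argLine y t := by
  rw [argLine_eq hy]
  linarith [Real.arctan_lt_pi_div_two (t / y)]

lemma argLine_neg (hy : 0 < y) (t : ℝ) : argLine y (-t) = π - argLine y t := by
  rw [argLine_eq hy, argLine_eq hy, neg_div, Real.arctan_neg]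
  ring

lemma argLine_zero (hy : 0 < y) : argLine y 0 = π / 2 := by
  simp [argLine_eq hy]

lemma tendsto_argLine_atTop (hy : 0 < y) : Tendsto (argLine y) atTop (𝓝 0) := by
  have harctan : Tendsto (fun t => Real.arctan (t / y)) atTop (𝓝 (π / 2)) :=
    (Real.tendsto_arctan_atTop.mono_right nhdsWithin_le_nhds).comp
      (tendsto_id.atTop_div_const hy)
  simpa [funext (argLine_eq hy)] using harctan.const_sub (π / 2)

end ArgLine

section AntitoneSeries

variable {f : ℝ → ℝ}

lemma hasSum_sub_shift_one (hf : Antitone f) (h0 : Tendsto f atTop (𝓝 0)) (p : ℝ) :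
    HasSum (fun n : ℕ => f (p + n) - f (p + 1 + n)) (f p) := by
  rw [hasSum_iff_tendsto_nat_of_nonneg fun n => sub_nonneg.2 (hf (by linarith))]
  have htelescope (N : ℕ) :
      ∑ n ∈ Finset.range N, (f (p + n) - f (p + 1 + n)) = f p - f (p + N) := by
    have := Finset.sum_range_sub' (fun n : ℕ => f (p + n)) N
    push_cast at this
    simpa only [add_zero, add_assoc, add_comm (1 : ℝ)] using this
  simp_rw [htelescope]
  simpa using (h0.comp (tendsto_atTop_add_const_left _ p tendsto_natCast_atTop_atTop)).const_sub
    (f p)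

lemma summable_sub_shift_nat (hf : Antitone f) (h0 : Tendsto f atTop (𝓝 0)) (p : ℝ) (m : ℕ) :
    Summable fun n : ℕ => f (p + n) - f (p + m + n) := by
  induction m with
  | zero => simp
  | succ m ih =>
    refine (ih.add (hasSum_sub_shift_one hf h0 (p + m)).summable).congr fun n => ?_
    push_cast
    rw [sub_add_sub_cancel, add_assoc p]

lemma summable_sub_shift (hf : Antitone f) (h0 : Tendsto f atTop (𝓝 0)) (p q : ℝ) :
    Summable fun n : ℕ => f (p + n) - f (q + n) := by
  wlog hpq : p ≤ q generalizing p q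
  · simpa using (this q p (le_of_not_ge hpq)).neg
  obtain ⟨m, hm⟩ := exists_nat_ge (q - p)
  exact (summable_sub_shift_nat hf h0 p m).of_nonneg_of_le
    (fun n => sub_nonneg.2 (hf (by linarith))) fun n => sub_le_sub_left (hf (by linarith)) _

end AntitoneSeries

section ArgGamma

/-- A real-valued lift of `arg Γ(p + iy) - arg Γ(iy)`, obtained by summing the arguments of the
factors in Euler's product for `Γ`; only its increments in `p` matter. -/
noncomputable def argGamma (y p : ℝ) : ℝ := ∑' n : ℕ, (argLine y (0 + n) - argLine y (p + n))

variable {y : ℝ}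

lemma hasSum_argGamma_sub (hy : 0 < y) (p q : ℝ) :
    HasSum (fun n : ℕ => argLine y (q + n) - argLine y (p + n)) (argGamma y p - argGamma y q) := by
  have hsum := summable_sub_shift (argLine_strictAnti hy).antitone (tendsto_argLine_atTop hy) 0
  simpa only [argGamma, sub_sub_sub_cancel_left] using (hsum p).hasSum.sub (hsum q).hasSum

lemma argGamma_strictMono (hy : 0 < y) : StrictMono (argGamma y) := fun p q hpq => by
  have hterm (n : ℕ) : 0 < argLine y (p + n) - argLine y (q + n) :=
    sub_pos.2 (argLine_strictAnti hy (by linarith))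
  exact sub_pos.1 <| hasSum_lt (fun n => (hterm n).le) (hterm 0) hasSum_zero
    (hasSum_argGamma_sub hy q p)

lemma argGamma_add_one (hy : 0 < y) (p : ℝ) : argGamma y (p + 1) = argGamma y p + argLine y p :=
  eq_add_of_sub_eq' <| (hasSum_argGamma_sub hy (p + 1) p).unique <|
    hasSum_sub_shift_one (argLine_strictAnti hy).antitone (tendsto_argLine_atTop hy) p

lemma Gamma_ne_zero_of_im_ne_zero {z : ℂ} (hz : z.im ≠ 0) : Gamma z ≠ 0 :=
  Gamma_ne_zero fun m h => hz (by simp [h])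

lemma arg_GammaSeq_coe_angle (hy : y ≠ 0) (p : ℝ) {n : ℕ} (hn : n ≠ 0) :
    (arg (GammaSeq (p + y * I) n) : Real.Angle) =
      ((y * Real.log n - ∑ j ∈ Finset.range (n + 1), argLine y (p + j) : ℝ) : Real.Angle) := by
  have hn' : (n : ℂ) ≠ 0 := Nat.cast_ne_zero.2 hn
  have hfactor (j : ℕ) : (p + y * I + j : ℂ) ≠ 0 := fun h => hy (by simpa using congrArg im h)
  have hcpow : (arg ((n : ℂ) ^ (p + y * I : ℂ)) : Real.Angle) = (y * Real.log n : ℝ) := by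
    rw [cpow_def_of_ne_zero hn', arg_exp_coe_angle, ← natCast_log, im_ofReal_mul]
    simp [mul_comm]
  have hfact : arg (n.factorial : ℂ) = 0 := by rw [natCast_arg]
  have hline (j : ℕ) : arg (p + y * I + j) = argLine y (p + j) := by
    rw [argLine, ofReal_add, ofReal_natCast, add_right_comm]
  rw [GammaSeq, arg_div_coe_angle (mul_ne_zero (by simp [cpow_eq_zero_iff, hn'])
      (by exact_mod_cast n.factorial_ne_zero)) (Finset.prod_ne_zero_iff.2 fun j _ => hfactor j),
    arg_mul_coe_angle (by simp [cpow_eq_zero_iff, hn']) (by exact_mod_cast n.factorial_ne_zero),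
    arg_prod_coe_angle _ fun j _ => hfactor j, hcpow, hfact]
  rw [Real.Angle.coe_sub, Real.Angle.coe_zero, add_zero, ← Real.Angle.coe_coeHom, map_sum]
  simp only [hline, Real.Angle.coe_coeHom]

lemma arg_Gamma_sub_arg_Gamma_coe_angle (hy : 0 < y) (p q : ℝ) :
    (arg (Gamma (p + y * I)) - arg (Gamma (q + y * I)) : Real.Angle) =
      (argGamma y p - argGamma y q : ℝ) := by
  have hGamma (t : ℝ) : Tendsto (fun n => (arg (GammaSeq (t + y * I) n) : Real.Angle)) atTop
      (𝓝 (arg (Gamma (t + y * I)))) :=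
    (continuousAt_arg_coe_angle (Gamma_ne_zero_of_im_ne_zero (by simpa using hy.ne'))).tendsto.comp
      (GammaSeq_tendsto_Gamma _)
  have hsum : Tendsto (fun n => ((∑ j ∈ Finset.range (n + 1),
      (argLine y (q + j) - argLine y (p + j)) : ℝ) : Real.Angle)) atTop
      (𝓝 (argGamma y p - argGamma y q : ℝ)) :=
    (Real.Angle.continuous_coe.tendsto _).comp
      ((hasSum_argGamma_sub hy p q).tendsto_sum_nat.comp (tendsto_add_atTop_nat 1))
  refine tendsto_nhds_unique (((hGamma p).sub (hGamma q)).congr' ?_) hsum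
  filter_upwards [eventually_ne_atTop 0] with n hn
  rw [arg_GammaSeq_coe_angle hy.ne' p hn, arg_GammaSeq_coe_angle hy.ne' q hn,
    ← Real.Angle.coe_sub, sub_sub_sub_cancel_left, Finset.sum_sub_distrib]

end ArgGamma

section GammaPair

/-- The reciprocal of `Γ(a - w) Γ(a + w)`. In this form it is entire and even in `w`. -/
noncomputable def invGammaPair (a : ℝ) (w : ℂ) : ℂ := (Gamma (a - w) * Gamma (a + w))⁻¹

/-- A lift to `ℝ` of the argument of `Γ(a - w) Γ(a + w)` at `w = x + iy`, for `y > 0`. -/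
noncomputable def gammaPairPhase (a y x : ℝ) : ℝ := argGamma y (a + x) - argGamma y (a - x)

variable {a y : ℝ}

lemma invGammaPair_conj (a : ℝ) (w : ℂ) :
    invGammaPair a (conj w) = conj (invGammaPair a w) := by
  simp only [invGammaPair, map_inv₀, map_mul, ← Gamma_conj, map_sub, map_add, conj_ofReal]

lemma differentiable_invGammaPair (a : ℝ) : Differentiable ℂ (invGammaPair a) := by
  have hsub := differentiable_one_div_Gamma.comp (differentiable_id.const_sub (a : ℂ))
  have hadd := differentiable_one_div_Gamma.comp (differentiable_id.const_add (a : ℂ))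
  have heq : invGammaPair a = fun w => (Gamma (a - w))⁻¹ * (Gamma (a + w))⁻¹ :=
    funext fun w => mul_inv _ _
  exact heq ▸ hsub.mul hadd

lemma invGammaPair_ne_zero_of_im_ne_zero {w : ℂ} (hw : w.im ≠ 0) : invGammaPair a w ≠ 0 :=
  inv_ne_zero <| mul_ne_zero (Gamma_ne_zero_of_im_ne_zero (by simpa))
    (Gamma_ne_zero_of_im_ne_zero (by simpa))

lemma cos_pi_mul_eq (w : ℂ) : cos (π * w) = π * invGammaPair (1 / 2 : ℝ) w := by
  have h := Gamma_mul_Gamma_one_sub (1 / 2 - w)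
  have hsin : sin (π * (1 / 2 - w)) = cos (π * w) := by
    rw [mul_sub, mul_one_div, sin_pi_div_two_sub]
  rw [hsin, show (1 : ℂ) - (1 / 2 - w) = 1 / 2 + w by ring] at h
  have hpi : (π : ℂ) ≠ 0 := ofReal_ne_zero.2 Real.pi_ne_zero
  rw [invGammaPair, ofReal_div, ofReal_one, ofReal_ofNat, h, inv_div, mul_div_cancel₀ _ hpi]

lemma gammaPairPhase_strictMono (hy : 0 < y) (a : ℝ) : StrictMono (gammaPairPhase a y) :=
  fun _ _ h => sub_lt_sub (argGamma_strictMono hy (by linarith))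
    (argGamma_strictMono hy (by linarith))

lemma gammaPairPhase_zero (a y : ℝ) : gammaPairPhase a y 0 = 0 := by
  simp [gammaPairPhase]

lemma arg_invGammaPair_coe_angle (hy : 0 < y) (a x : ℝ) :
    (arg (invGammaPair a (x + y * I)) : Real.Angle) = -(gammaPairPhase a y x : ℝ) := by
  have hconj : Gamma (a - (x + y * I)) = conj (Gamma ((a - x : ℝ) + y * I)) := by
    rw [← Gamma_conj]
    congr 1
    simp only [map_add, map_sub, map_mul, conj_ofReal, conj_I, ofReal_sub]
    ring
  have hne (t : ℝ) : Gamma (t + y * I) ≠ 0 :=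
    Gamma_ne_zero_of_im_ne_zero (by simpa using hy.ne')
  rw [invGammaPair, arg_inv_coe_angle, ← add_assoc, ← ofReal_add, hconj,
    arg_mul_coe_angle (by simpa using hne (a - x)) (hne _), arg_conj_coe_angle, gammaPairPhase,
    ← arg_Gamma_sub_arg_Gamma_coe_angle hy, neg_add_eq_sub]

end GammaPair

section Phase

/-- The entire even function `cos (πw) / (Γ(σ - w) Γ(σ + w))`. With `σ = s + 1/2` and
`w = β - s + 1/2`, the zeros of `fNeumann s` in the half-plane `2s - 1 < Re β` are the points
where it takes its value at `σ - 1`. -/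
noncomputable def evenSymbol (σ : ℝ) (w : ℂ) : ℂ := cos (π * w) * invGammaPair σ w

/-- A lift to `ℝ` of the argument of `(evenSymbol σ (x + iy))⁻¹`, for `y > 0`. -/
noncomputable def phase (σ y x : ℝ) : ℝ := gammaPairPhase (1 / 2) y x + gammaPairPhase σ y x

variable {σ y x : ℝ}

lemma evenSymbol_conj (σ : ℝ) (w : ℂ) : evenSymbol σ (conj w) = conj (evenSymbol σ w) := by
  rw [evenSymbol, evenSymbol, map_mul, ← cos_conj, map_mul, conj_ofReal, invGammaPair_conj]

lemma differentiable_evenSymbol (σ : ℝ) : Differentiable ℂ (evenSymbol σ) :=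
  (differentiable_id.const_mul (π : ℂ)).ccos.mul (differentiable_invGammaPair σ)

@[fun_prop]
lemma continuous_evenSymbol (σ : ℝ) : Continuous (evenSymbol σ) :=
  (differentiable_evenSymbol σ).continuous

lemma evenSymbol_eq_mul_invGammaPair (σ : ℝ) (w : ℂ) :
    evenSymbol σ w = π * (invGammaPair (1 / 2 : ℝ) w * invGammaPair σ w) := by
  rw [evenSymbol, cos_pi_mul_eq, mul_assoc]

lemma evenSymbol_ne_zero_of_im_ne_zero {w : ℂ} (hw : w.im ≠ 0) : evenSymbol σ w ≠ 0 := by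
  rw [evenSymbol_eq_mul_invGammaPair]
  exact mul_ne_zero (ofReal_ne_zero.2 Real.pi_ne_zero)
    (mul_ne_zero (invGammaPair_ne_zero_of_im_ne_zero hw) (invGammaPair_ne_zero_of_im_ne_zero hw))

lemma arg_evenSymbol_coe_angle (hy : 0 < y) (σ x : ℝ) :
    (arg (evenSymbol σ (x + y * I)) : Real.Angle) = (-phase σ y x : ℝ) := by
  have him : (x + y * I : ℂ).im ≠ 0 := by simpa using hy.ne'
  rw [evenSymbol_eq_mul_invGammaPair, arg_real_mul _ Real.pi_pos,
    arg_mul_coe_angle (invGammaPair_ne_zero_of_im_ne_zero him)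
      (invGammaPair_ne_zero_of_im_ne_zero him),
    arg_invGammaPair_coe_angle hy, arg_invGammaPair_coe_angle hy, phase, neg_add,
    Real.Angle.coe_add, Real.Angle.coe_neg, Real.Angle.coe_neg]

lemma re_evenSymbol (hy : 0 < y) (σ x : ℝ) :
    (evenSymbol σ (x + y * I)).re = ‖evenSymbol σ (x + y * I)‖ * Real.cos (phase σ y x) := by
  rw [re_eq_norm_mul_cos_of_arg_coe_angle_eq (arg_evenSymbol_coe_angle hy σ x), Real.cos_neg]

lemma im_evenSymbol (hy : 0 < y) (σ x : ℝ) :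
    (evenSymbol σ (x + y * I)).im = -(‖evenSymbol σ (x + y * I)‖ * Real.sin (phase σ y x)) := by
  rw [im_eq_norm_mul_sin_of_arg_coe_angle_eq (arg_evenSymbol_coe_angle hy σ x), Real.sin_neg,
    mul_neg]

lemma norm_evenSymbol_pos (hy : 0 < y) (σ x : ℝ) : 0 < ‖evenSymbol σ (x + y * I)‖ :=
  norm_pos_iff.2 <| evenSymbol_ne_zero_of_im_ne_zero (by simpa using hy.ne')

lemma im_evenSymbol_pos (hy : 0 < y) (hπ : π < phase σ y x) (h2π : phase σ y x < 2 * π) :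
    0 < (evenSymbol σ (x + y * I)).im := by
  have hsin : Real.sin (phase σ y x) < 0 := by
    rw [← Real.sin_sub_two_pi]
    exact Real.sin_neg_of_neg_of_neg_pi_lt (by linarith) (by linarith)
  rw [im_evenSymbol hy]
  exact neg_pos.2 (mul_neg_of_pos_of_neg (norm_evenSymbol_pos hy σ x) hsin)

lemma im_evenSymbol_neg (hy : 0 < y) (h2π : 2 * π < phase σ y x) (h3π : phase σ y x < 3 * π) :
    (evenSymbol σ (x + y * I)).im < 0 := by
  have hsin : 0 < Real.sin (phase σ y x) := by
    rw [← Real.sin_sub_two_pi]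
    exact Real.sin_pos_of_pos_of_lt_pi (by linarith) (by linarith)
  rw [im_evenSymbol hy]
  exact neg_neg_of_pos (mul_pos (norm_evenSymbol_pos hy σ x) hsin)

lemma phase_strictMono (hy : 0 < y) (σ : ℝ) : StrictMono (phase σ y) :=
  (gammaPairPhase_strictMono hy _).add (gammaPairPhase_strictMono hy σ)

lemma phase_zero (σ y : ℝ) : phase σ y 0 = 0 := by
  rw [phase, gammaPairPhase_zero, gammaPairPhase_zero, add_zero]

lemma argLine_add_argLine_neg (hy : 0 < y) (t : ℝ) : argLine y t + argLine y (-t) = π := by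
  rw [argLine_neg hy, add_sub_cancel]

lemma gammaPairPhase_half_add_one (hy : 0 < y) (x : ℝ) :
    gammaPairPhase (1 / 2) y (x + 1) = gammaPairPhase (1 / 2) y x + π := by
  have hright := argGamma_add_one hy (1 / 2 + x)
  have hleft := argGamma_add_one hy (-(1 / 2 + x))
  rw [show -(1 / 2 + x) + 1 = 1 / 2 - x by ring] at hleft
  rw [gammaPairPhase, gammaPairPhase, ← add_assoc, hright, hleft,
    show (1 / 2 : ℝ) - (x + 1) = -(1 / 2 + x) by ring]
  linarith [argLine_add_argLine_neg hy (1 / 2 + x)]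

lemma gammaPairPhase_half_one (hy : 0 < y) : gammaPairPhase (1 / 2) y 1 = π := by
  simpa [gammaPairPhase_zero] using gammaPairPhase_half_add_one hy 0

lemma gammaPairPhase_half_half (hy : 0 < y) : gammaPairPhase (1 / 2) y (1 / 2) = π / 2 := by
  have h := argGamma_add_one hy 0
  rw [argLine_zero hy, zero_add] at h
  rw [gammaPairPhase, add_halves, sub_self, h, add_sub_cancel_left]

lemma gammaPairPhase_half_three_halves (hy : 0 < y) :
    gammaPairPhase (1 / 2) y (3 / 2) = 3 * π / 2 := by
  rw [show (3 / 2 : ℝ) = 1 / 2 + 1 by norm_num, gammaPairPhase_half_add_one hy,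
    gammaPairPhase_half_half hy]
  ring

lemma gammaPairPhase_one (hy : 0 < y) (a : ℝ) :
    gammaPairPhase a y 1 = argLine y (a - 1) + argLine y a := by
  have h := argGamma_add_one hy (a - 1)
  rw [sub_add_cancel] at h
  rw [gammaPairPhase, argGamma_add_one hy, h]
  ring

lemma gammaPairPhase_three_halves (hy : 0 < y) (a : ℝ) :
    gammaPairPhase a y (3 / 2) =
      argLine y (a - 3 / 2) + argLine y (a - 1 / 2) + argLine y (a + 1 / 2) := by
  have h₀ := argGamma_add_one hy (a - 3 / 2)
  have h₁ := argGamma_add_one hy (a - 1 / 2)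
  have h₂ := argGamma_add_one hy (a + 1 / 2)
  rw [show a - 3 / 2 + 1 = a - 1 / 2 by ring] at h₀
  rw [show a - 1 / 2 + 1 = a + 1 / 2 by ring] at h₁
  rw [show a + 1 / 2 + 1 = a + 3 / 2 by ring] at h₂
  rw [gammaPairPhase, h₂, h₁, h₀]
  ring

lemma phase_lt_two_pi (hy : 0 < y) (hσ : 1 / 2 < σ) (hx : x ≤ 1) : phase σ y x < 2 * π := by
  have hone : phase σ y 1 < 2 * π := by
    have hanti := argLine_strictAnti hy (show 1 - σ < σ by linarith)
    have hsum := argLine_add_argLine_neg hy (σ - 1)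
    rw [neg_sub] at hsum
    rw [phase, gammaPairPhase_half_one hy, gammaPairPhase_one hy]
    linarith
  exact ((phase_strictMono hy σ).monotone hx).trans_lt hone

lemma pi_lt_phase (hy : 0 < y) (hσ : 1 / 2 < σ) (hx : min σ 1 ≤ x) : π < phase σ y x := by
  refine lt_of_lt_of_le ?_ ((phase_strictMono hy σ).monotone hx)
  rcases le_total σ 1 with hσ1 | hσ1
  · have hcos := gammaPairPhase_strictMono hy (1 / 2) hσ
    have hmono := argGamma_strictMono hy (show (0 : ℝ) + 1 < σ + σ by linarith)
    rw [argGamma_add_one hy, argLine_zero hy] at hmono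
    rw [gammaPairPhase_half_half hy] at hcos
    rw [min_eq_left hσ1, phase, gammaPairPhase.eq_1 σ, sub_self]
    linarith
  · have hpos := gammaPairPhase_strictMono hy σ one_pos
    rw [gammaPairPhase_zero] at hpos
    rw [min_eq_right hσ1, phase, gammaPairPhase_half_one hy]
    linarith

lemma gammaPairPhase_one_three_halves_lt (hy : 0 < y) :
    gammaPairPhase 1 y (3 / 2) < 3 * π / 2 := by
  have hanti := argLine_strictAnti hy (show (0 : ℝ) < 1 + 1 / 2 by norm_num)
  have hsum := argLine_add_argLine_neg hy (1 - 1 / 2)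
  rw [argLine_zero hy] at hanti
  rw [show -(1 - 1 / 2 : ℝ) = 1 - 3 / 2 by norm_num] at hsum
  rw [gammaPairPhase_three_halves hy]
  linarith

lemma gammaPairPhase_self_add_half_mem_Ioo (hy : 0 < y) (hσ : σ ∈ Ioc (1 / 2) 1) :
    gammaPairPhase σ y (σ + 1 / 2) ∈ Ioo π (3 * π / 2) := by
  have hmono := argGamma_strictMono hy
  have hlower := hmono (show (1 / 2 : ℝ) + 1 < σ + (σ + 1 / 2) by linarith [hσ.1])
  have hupper := hmono.monotone (show σ + (σ + 1 / 2) ≤ 1 + 3 / 2 by linarith [hσ.2])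
  have hone := gammaPairPhase_half_one hy
  have hthree := gammaPairPhase_one_three_halves_lt hy
  have hleft : σ - (σ + 1 / 2) = -1 / 2 := by ring
  rw [gammaPairPhase, show (1 / 2 : ℝ) - 1 = -1 / 2 by norm_num] at hone
  rw [gammaPairPhase, show (1 : ℝ) - 3 / 2 = -1 / 2 by norm_num] at hthree
  rw [gammaPairPhase, hleft]
  constructor <;> linarith

lemma gammaPairPhase_three_halves_mem_Ioo (hy : 0 < y) (hσ : σ ∈ Ico 1 (3 / 2)) :
    gammaPairPhase σ y (3 / 2) ∈ Ioo (π / 2) (3 * π / 2) := by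
  have hanti := argLine_strictAnti hy
  have hthree := gammaPairPhase_one_three_halves_lt hy
  rw [gammaPairPhase_three_halves hy] at hthree ⊢
  constructor
  · have hleft := hanti (show σ - 3 / 2 < 0 by linarith [hσ.2])
    rw [argLine_zero hy] at hleft
    linarith [argLine_pos hy (σ - 1 / 2), argLine_pos hy (σ + 1 / 2)]
  · have h₀ := hanti.antitone (sub_le_sub_right hσ.1 (3 / 2))
    have h₁ := hanti.antitone (sub_le_sub_right hσ.1 (1 / 2))
    have h₂ := hanti.antitone (add_le_add_left hσ.1 (1 / 2))
    linarith

lemma phase_min_add_half_mem_Ioo (hy : 0 < y) (hσ : σ ∈ Ioo (1 / 2) (3 / 2)) :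
    phase σ y (min σ 1 + 1 / 2) ∈ Ioo (2 * π) (3 * π) := by
  rcases le_total σ 1 with hσ1 | hσ1
  · have hcos := gammaPairPhase_strictMono hy (1 / 2)
    have hlower := hcos (show 1 < σ + 1 / 2 by linarith [hσ.1])
    have hupper := hcos.monotone (show σ + 1 / 2 ≤ 3 / 2 by linarith)
    have hpair := gammaPairPhase_self_add_half_mem_Ioo hy ⟨hσ.1, hσ1⟩
    rw [gammaPairPhase_half_one hy] at hlower
    rw [gammaPairPhase_half_three_halves hy] at hupper
    rw [min_eq_left hσ1, phase]
    constructor <;> linarith [hpair.1, hpair.2]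
  · have hpair := gammaPairPhase_three_halves_mem_Ioo hy ⟨hσ1, hσ.2⟩
    rw [min_eq_right hσ1, show (1 : ℝ) + 1 / 2 = 3 / 2 by norm_num, phase,
      gammaPairPhase_half_three_halves hy]
    constructor <;> linarith [hpair.1, hpair.2]

end Phase

section Growth

/-- The filter of points of the vertical strip `a ≤ re w ≤ b` whose imaginary part is large in
absolute value. -/
def stripEnds (a b : ℝ) : Filter ℂ := comap (fun w => |w.im|) atTop ⊓ 𝓟 (re ⁻¹' Icc a b)

variable {a b : ℝ}

lemma tendsto_abs_im_stripEnds (a b : ℝ) : Tendsto (fun w => |w.im|) (stripEnds a b) atTop :=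
  tendsto_comap.mono_left inf_le_left

lemma eventually_stripEnds_re_mem_Icc (a b : ℝ) : ∀ᶠ w in stripEnds a b, w.re ∈ Icc a b :=
  inf_le_right (a := comap (fun w : ℂ => |w.im|) atTop) (mem_principal_self _)

lemma tendsto_stripEnds_iff {ι : Type*} {l : Filter ι} {g : ι → ℂ} :
    Tendsto g l (stripEnds a b) ↔
      Tendsto (fun i => |(g i).im|) l atTop ∧ ∀ᶠ i in l, (g i).re ∈ Icc a b := by
  rw [stripEnds, tendsto_inf, tendsto_comap_iff, tendsto_principal]
  rfl

lemma tendsto_const_add_stripEnds (c a b : ℝ) :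
    Tendsto (fun w : ℂ => c + w) (stripEnds a b) (stripEnds (c + a) (c + b)) := by
  refine tendsto_stripEnds_iff.2 ⟨by simpa using tendsto_abs_im_stripEnds a b, ?_⟩
  filter_upwards [eventually_stripEnds_re_mem_Icc a b] with w hw
  simpa using hw

lemma tendsto_const_sub_stripEnds (c a b : ℝ) :
    Tendsto (fun w : ℂ => c - w) (stripEnds a b) (stripEnds (c - b) (c - a)) := by
  refine tendsto_stripEnds_iff.2 ⟨by simpa using tendsto_abs_im_stripEnds a b, ?_⟩
  filter_upwards [eventually_stripEnds_re_mem_Icc a b] with w hw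
  exact ⟨sub_le_sub_left hw.2 c, sub_le_sub_left hw.1 c⟩

lemma norm_Gamma_le_Gamma_re {z : ℂ} (hz : 0 < z.re) : ‖Gamma z‖ ≤ Real.Gamma z.re := by
  rw [Gamma_eq_integral hz, Real.Gamma_eq_integral hz, GammaIntegral]
  refine (MeasureTheory.norm_integral_le_integral_norm _).trans_eq
    (MeasureTheory.setIntegral_congr_fun measurableSet_Ioi fun t ht => ?_)
  rw [norm_mul, norm_real, Real.norm_of_nonneg (Real.exp_pos _).le,
    norm_cpow_eq_rpow_re_of_pos ht, sub_re, one_re]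

lemma norm_Gamma_le_div_abs_im {z : ℂ} (hz : z.im ≠ 0) :
    ‖Gamma z‖ ≤ ‖Gamma (z + 1)‖ / |z.im| := by
  have hz0 : z ≠ 0 := fun h => hz (by simp [h])
  rw [Gamma_add_one z hz0, norm_mul, le_div_iff₀ (abs_pos.2 hz), mul_comm]
  exact mul_le_mul_of_nonneg_right (abs_im_le_norm z) (norm_nonneg _)

lemma exists_norm_Gamma_le_of_one_le_abs_im (a b : ℝ) :
    ∃ M, ∀ z : ℂ, z.re ∈ Icc a b → 1 ≤ |z.im| → ‖Gamma z‖ ≤ M := by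
  obtain ⟨n, hn⟩ := exists_nat_gt (-a)
  induction n generalizing a b with
  | zero =>
    have ha : 0 < a := by simpa using hn
    obtain ⟨M, hM⟩ := isCompact_Icc.bddAbove_image
      (Real.differentiableOn_Gamma_Ioi.continuousOn.mono fun t (ht : t ∈ Icc a b) =>
        ha.trans_le ht.1)
    exact ⟨M, fun z hz _ => (norm_Gamma_le_Gamma_re (ha.trans_le hz.1)).trans
      (hM (mem_image_of_mem _ hz))⟩
  | succ n ih =>
    obtain ⟨M, hM⟩ := ih (a + 1) (b + 1) (by push_cast at hn; linarith)
    refine ⟨M, fun z hz him => (norm_Gamma_le_div_abs_im (abs_pos.1 (by linarith))).trans ?_⟩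
    exact (div_le_self (norm_nonneg _) him).trans (hM _ (by simpa using hz) (by simpa using him))

lemma tendsto_Gamma_stripEnds (a b : ℝ) : Tendsto Gamma (stripEnds a b) (𝓝[≠] 0) := by
  obtain ⟨M, hM⟩ := exists_norm_Gamma_le_of_one_le_abs_im (a + 1) (b + 1)
  have him := (tendsto_abs_im_stripEnds a b).eventually_ge_atTop 1
  refine tendsto_nhdsWithin_iff.2 ⟨squeeze_zero_norm' ?_
    ((tendsto_abs_im_stripEnds a b).const_div_atTop M), ?_⟩
  · filter_upwards [him, eventually_stripEnds_re_mem_Icc a b] with z hz hre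
    refine (norm_Gamma_le_div_abs_im (abs_pos.1 (by linarith))).trans ?_
    gcongr
    exact hM _ (by simpa using hre) (by simpa using hz)
  · filter_upwards [him] with z hz
    exact Gamma_ne_zero_of_im_ne_zero (abs_pos.1 (by linarith))

lemma tendsto_norm_invGammaPair_stripEnds (c a b : ℝ) :
    Tendsto (fun w => ‖invGammaPair c w‖) (stripEnds a b) atTop := by
  have hinv := tendsto_norm_inv_nhdsNE_zero_atTop (α := ℂ)
  have hsub := (hinv.comp (tendsto_Gamma_stripEnds _ _)).comp (tendsto_const_sub_stripEnds c a b)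
  have hadd := (hinv.comp (tendsto_Gamma_stripEnds _ _)).comp (tendsto_const_add_stripEnds c a b)
  refine (hsub.atTop_mul_atTop₀ hadd).congr fun w => ?_
  simp only [Function.comp_apply, invGammaPair, mul_inv, norm_mul]

lemma tendsto_norm_evenSymbol_stripEnds (σ a b : ℝ) :
    Tendsto (fun w => ‖evenSymbol σ w‖) (stripEnds a b) atTop := by
  have hpair (c : ℝ) := tendsto_norm_invGammaPair_stripEnds c a b
  refine (((hpair (1 / 2)).atTop_mul_atTop₀ (hpair σ)).const_mul_atTop Real.pi_pos).congr
    fun w => ?_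
  rw [evenSymbol_eq_mul_invGammaPair, norm_mul, norm_mul, norm_real,
    Real.norm_of_nonneg Real.pi_pos.le]

end Growth

section RealAxis

lemma convexOn_add_le_add_of_abs_le_abs {S : Set ℝ} {φ : ℝ → ℝ} (hφ : ConvexOn ℝ S φ) {c x y : ℝ}
    (hleft : c - y ∈ S) (hright : c + y ∈ S) (hxy : |x| ≤ |y|) :
    φ (c - x) + φ (c + x) ≤ φ (c - y) + φ (c + y) := by
  obtain ⟨u, v, hu, hv, huv, hx⟩ : c + x ∈ segment ℝ (c - y) (c + y) := by
    have hx := abs_le.1 hxy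
    rw [segment_eq_uIcc, mem_uIcc]
    rcases abs_cases y with hy | hy
    · exact .inl ⟨by linarith, by linarith⟩
    · exact .inr ⟨by linarith, by linarith⟩
  have hx' : v • (c - y) + u • (c + y) = c - x := by
    simp only [smul_eq_mul] at hx ⊢
    linear_combination 2 * c * huv - hx
  have h₁ := hφ.2 hleft hright hu hv huv
  have h₂ := hφ.2 hleft hright hv hu (by rwa [add_comm])
  rw [hx] at h₁
  rw [hx'] at h₂
  simp only [smul_eq_mul] at h₁ h₂
  linear_combination h₁ + h₂ + (φ (c - y) + φ (c + y)) * huv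

lemma realGamma_sub_mul_realGamma_add_le {a x y : ℝ} (hxy : |x| ≤ |y|) (hya : |y| < a) :
    Real.Gamma (a - x) * Real.Gamma (a + x) ≤ Real.Gamma (a - y) * Real.Gamma (a + y) := by
  have hx := abs_lt.1 (hxy.trans_lt hya)
  have hy := abs_lt.1 hya
  have hpos {t : ℝ} (ht : 0 < t) := Real.Gamma_pos_of_pos ht
  have hx₁ := hpos (show 0 < a - x by linarith)
  have hx₂ := hpos (show 0 < a + x by linarith)
  have hy₁ := hpos (show 0 < a - y by linarith)
  have hy₂ := hpos (show 0 < a + y by linarith)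
  rw [← Real.log_le_log_iff (mul_pos hx₁ hx₂) (mul_pos hy₁ hy₂), Real.log_mul hx₁.ne' hx₂.ne',
    Real.log_mul hy₁.ne' hy₂.ne']
  exact convexOn_add_le_add_of_abs_le_abs Real.convexOn_log_Gamma (mem_Ioi.2 (by linarith))
    (mem_Ioi.2 (by linarith)) hxy

lemma realGamma_midpoint_mul_self_le {a b : ℝ} (ha : 0 < a) (hb : 0 < b) :
    Real.Gamma ((a + b) / 2) * Real.Gamma ((a + b) / 2) ≤ Real.Gamma a * Real.Gamma b := by
  have h := realGamma_sub_mul_realGamma_add_le (a := (a + b) / 2) (x := 0) (y := (b - a) / 2)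
    (by simp) (abs_lt.2 ⟨by linarith, by linarith⟩)
  rwa [sub_zero, add_zero, show (a + b) / 2 - (b - a) / 2 = a by ring,
    show (a + b) / 2 + (b - a) / 2 = b by ring] at h

/-- The restriction of `evenSymbol σ` to the real axis. -/
noncomputable def realEvenSymbol (σ x : ℝ) : ℝ :=
  Real.cos (π * x) * (Real.Gamma (σ - x) * Real.Gamma (σ + x))⁻¹

variable {σ x y : ℝ}

lemma ofReal_realEvenSymbol (σ x : ℝ) : (realEvenSymbol σ x : ℂ) = evenSymbol σ x := by
  rw [realEvenSymbol, evenSymbol, invGammaPair]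
  push_cast [← Gamma_ofReal]
  rfl

lemma continuous_realEvenSymbol (σ : ℝ) : Continuous (realEvenSymbol σ) := by
  have heq : realEvenSymbol σ = fun x : ℝ => (evenSymbol σ x).re :=
    funext fun x => by rw [← ofReal_realEvenSymbol, ofReal_re]
  rw [heq]
  exact continuous_re.comp (by fun_prop)

lemma realEvenSymbol_neg (σ x : ℝ) : realEvenSymbol σ (-x) = realEvenSymbol σ x := by
  rw [realEvenSymbol, realEvenSymbol, mul_neg, Real.cos_neg, sub_neg_eq_add, ← sub_eq_add_neg,
    mul_comm (Real.Gamma _)]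

lemma realEvenSymbol_abs (σ x : ℝ) : realEvenSymbol σ |x| = realEvenSymbol σ x := by
  rcases abs_choice x with h | h <;> rw [h]
  exact realEvenSymbol_neg σ x

lemma realEvenSymbol_pos (hσ : 1 / 2 ≤ σ) (hx : |x| < 1 / 2) : 0 < realEvenSymbol σ x := by
  obtain ⟨hx₁, hx₂⟩ := abs_lt.1 hx
  refine mul_pos (Real.cos_pos_of_mem_Ioo ⟨?_, ?_⟩) (inv_pos.2 (mul_pos
    (Real.Gamma_pos_of_pos (by linarith)) (Real.Gamma_pos_of_pos (by linarith))))
  all_goals nlinarith [Real.pi_pos]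

lemma realEvenSymbol_nonpos (hx : x ∈ Icc (1 / 2) (3 / 2)) (hxσ : x ≤ σ) :
    realEvenSymbol σ x ≤ 0 := by
  refine mul_nonpos_of_nonpos_of_nonneg (Real.cos_nonpos_of_pi_div_two_le_of_le ?_ ?_)
    (inv_nonneg.2 (mul_nonneg (Real.Gamma_nonneg_of_nonneg (by linarith))
      (Real.Gamma_nonneg_of_nonneg (by linarith [hx.1]))))
  all_goals nlinarith [Real.pi_pos, hx.1, hx.2]

lemma realEvenSymbol_strictAntiOn (hσ : 1 / 2 < σ) :
    StrictAntiOn (realEvenSymbol σ) (Icc 0 (1 / 2)) := fun x hx y hy hxy => by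
  have hcos : Real.cos (π * y) < Real.cos (π * x) :=
    Real.strictAntiOn_cos ⟨by nlinarith [Real.pi_pos, hx.1], by nlinarith [Real.pi_pos, hx.2]⟩
      ⟨by nlinarith [Real.pi_pos, hy.1], by nlinarith [Real.pi_pos, hy.2]⟩
      (mul_lt_mul_of_pos_left hxy Real.pi_pos)
  have hcos_nonneg : 0 ≤ Real.cos (π * y) :=
    Real.cos_nonneg_of_mem_Icc
      ⟨by nlinarith [Real.pi_pos, hy.1], by nlinarith [Real.pi_pos, hy.2]⟩
  have hpos : 0 < Real.Gamma (σ - x) * Real.Gamma (σ + x) :=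
    mul_pos (Real.Gamma_pos_of_pos (by linarith [hx.2]))
      (Real.Gamma_pos_of_pos (by linarith [hx.1]))
  have hGamma := realGamma_sub_mul_realGamma_add_le (abs_le_abs_of_nonneg hx.1 hxy.le)
    (show |y| < σ by rw [abs_of_nonneg hy.1]; linarith [hy.2])
  calc realEvenSymbol σ y
      ≤ Real.cos (π * y) * (Real.Gamma (σ - x) * Real.Gamma (σ + x))⁻¹ :=
        mul_le_mul_of_nonneg_left (inv_anti₀ hpos hGamma) hcos_nonneg
    _ < realEvenSymbol σ x := mul_lt_mul_of_pos_right hcos (inv_pos.2 hpos)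

lemma abs_sub_one_lt_half (hσ : σ ∈ Ioo (1 / 2) (3 / 2)) : |σ - 1| < 1 / 2 :=
  abs_lt.2 ⟨by linarith [hσ.1], by linarith [hσ.2]⟩

lemma realEvenSymbol_sub_one_pos (hσ : σ ∈ Ioo (1 / 2) (3 / 2)) :
    0 < realEvenSymbol σ (σ - 1) :=
  realEvenSymbol_pos hσ.1.le (abs_sub_one_lt_half hσ)

lemma realEvenSymbol_lt_sub_one (hσ : σ ∈ Ioo (1 / 2) (3 / 2)) (hx : |σ - 1| < x)
    (hxσ : x ≤ min σ 1) : realEvenSymbol σ x < realEvenSymbol σ (σ - 1) := by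
  obtain ⟨hx₁, hx₂⟩ := le_min_iff.1 hxσ
  rcases le_total x (1 / 2) with hhalf | hhalf
  · rw [← realEvenSymbol_abs σ (σ - 1)]
    exact realEvenSymbol_strictAntiOn hσ.1 ⟨abs_nonneg _, hx.le.trans hhalf⟩
      ⟨(abs_nonneg _).trans hx.le, hhalf⟩ hx
  · exact (realEvenSymbol_nonpos ⟨hhalf, by linarith⟩ hx₁).trans_lt (realEvenSymbol_sub_one_pos hσ)

end RealAxis

section ZeroFree

variable {σ : ℝ}

lemma evenSymbol_ne_ofReal_of_im_ne_zero (hσ : 1 / 2 < σ) {w : ℂ} (hre : w.re ∈ Ioc 0 1)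
    (him : w.im ≠ 0) {c : ℝ} (hc : 0 ≤ c) : evenSymbol σ w ≠ c := by
  wlog hy : 0 < w.im generalizing w
  · intro h
    refine this (w := conj w) (by simpa) (by simpa) ?_ (by rw [evenSymbol_conj, h, conj_ofReal])
    simpa using lt_of_le_of_ne (not_lt.1 hy) him
  intro h
  have hw := re_add_im w
  have hnorm := norm_evenSymbol_pos hy σ w.re
  have hphase_pos := phase_strictMono hy σ hre.1
  rw [phase_zero] at hphase_pos
  have hphase_lt := phase_lt_two_pi hy hσ hre.2
  have hsin : Real.sin (phase σ w.im w.re) = 0 := by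
    have him_eq := im_evenSymbol hy σ w.re
    rw [hw, h, ofReal_im, zero_eq_neg] at him_eq
    exact (mul_eq_zero.1 him_eq).resolve_left (by rw [← h, ← hw]; exact hnorm.ne')
  have hphase : phase σ w.im w.re = π := by
    rw [← sub_eq_zero, ← Real.sin_eq_zero_iff_of_lt_of_lt (by linarith) (by linarith),
      Real.sin_sub_pi, hsin, neg_zero]
  have hre_eq := re_evenSymbol hy σ w.re
  rw [hphase, Real.cos_pi, hw, h, ofReal_re] at hre_eq
  rw [hw, h] at hnorm
  linarith

lemma isCompact_setOf_evenSymbol_eq (σ a b : ℝ) (c : ℂ) :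
    IsCompact {w | w.re ∈ Icc a b ∧ evenSymbol σ w = c} := by
  obtain ⟨Y, hY⟩ : ∃ Y, ∀ w : ℂ, w.re ∈ Icc a b → Y ≤ |w.im| → ‖c‖ < ‖evenSymbol σ w‖ := by
    have h := (tendsto_norm_evenSymbol_stripEnds σ a b).eventually_gt_atTop ‖c‖
    rw [stripEnds, eventually_inf_principal, eventually_comap, eventually_atTop] at h
    obtain ⟨Y, hY⟩ := h
    exact ⟨Y, fun w hre him => hY _ him w rfl hre⟩
  have hbox : IsCompact (Icc a b ×ℂ Icc (-Y) Y) := isCompact_Icc.reProdIm isCompact_Icc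
  refine hbox.of_isClosed_subset ((isClosed_Icc.preimage continuous_re).inter
      (isClosed_eq (continuous_evenSymbol σ) continuous_const)) ?_
  rintro w ⟨hre, hw⟩
  refine ⟨hre, abs_le.1 ?_⟩
  by_contra! him
  exact (hY w hre him.le).ne' (congrArg norm hw)

lemma evenSymbol_ne_of_re_le_min (hσ : σ ∈ Ioo (1 / 2) (3 / 2)) {w : ℂ} (hw : |σ - 1| < w.re)
    (hwσ : w.re ≤ min σ 1) : evenSymbol σ w ≠ evenSymbol σ (σ - 1) := by
  have hconst : evenSymbol σ (σ - 1) = realEvenSymbol σ (σ - 1) := by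
    rw [ofReal_realEvenSymbol, ofReal_sub, ofReal_one]
  rw [hconst]
  by_cases him : w.im = 0
  · obtain ⟨x, rfl⟩ : ∃ x : ℝ, (x : ℂ) = w := ⟨w.re, ext rfl him.symm⟩
    rw [← ofReal_realEvenSymbol, Ne, ofReal_inj]
    exact (realEvenSymbol_lt_sub_one hσ hw hwσ).ne
  · exact evenSymbol_ne_ofReal_of_im_ne_zero hσ.1
      ⟨(abs_nonneg _).trans_lt hw, hwσ.trans (min_le_right _ _)⟩ him
      (realEvenSymbol_sub_one_pos hσ).le

lemma exists_strip_evenSymbol_ne (hσ : σ ∈ Ioo (1 / 2) (3 / 2)) :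
    ∃ α > 0, ∀ w : ℂ, |σ - 1| < w.re → w.re < min σ 1 + α →
      evenSymbol σ w ≠ evenSymbol σ (σ - 1) := by
  set l := min σ 1
  set K := {w : ℂ | w.re ∈ Icc l (l + 1) ∧ evenSymbol σ w = evenSymbol σ (σ - 1)}
  have hlσ : |σ - 1| < l :=
    (abs_sub_one_lt_half hσ).trans (lt_min hσ.1 (by norm_num))
  have hlK : l ∉ re '' K := by
    rintro ⟨w, ⟨-, hw⟩, hwl⟩
    exact evenSymbol_ne_of_re_le_min hσ (hlσ.trans_eq hwl.symm) hwl.le hw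
  obtain ⟨ε, hε, hball⟩ := Metric.isOpen_iff.1
    ((isCompact_setOf_evenSymbol_eq σ l (l + 1) _).image continuous_re).isClosed.isOpen_compl l hlK
  refine ⟨min ε 1, lt_min hε one_pos, fun w hw hwα heq => ?_⟩
  have hlw : l < w.re := by
    by_contra! hle
    exact evenSymbol_ne_of_re_le_min hσ hw hle heq
  have hε' := min_le_left ε 1
  have h1 := min_le_right ε 1
  refine hball ?_ (mem_image_of_mem re ⟨⟨hlw.le, by linarith⟩, heq⟩)
  rw [Metric.mem_ball, Real.dist_eq, abs_of_pos (sub_pos.2 hlw)]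
  linarith

end ZeroFree

section RightEdge

variable {σ : ℝ}

lemma inv_realGamma_eq_mul_inv_realGamma_add_one (t : ℝ) :
    (Real.Gamma t)⁻¹ = t * (Real.Gamma (t + 1))⁻¹ := by
  rcases eq_or_ne t 0 with rfl | ht
  · simp
  · rw [Real.Gamma_add_one ht, mul_inv, mul_inv_cancel_left₀ ht]

lemma realGamma_three_halves : Real.Gamma (3 / 2) = √π / 2 := by
  rw [show (3 / 2 : ℝ) = 1 / 2 + 1 by norm_num, Real.Gamma_add_one (by norm_num),
    Real.Gamma_one_half_eq]
  ring

lemma sin_pi_mul_le_four_mul (hσ : σ ∈ Ioo 0 1) :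
    Real.sin (π * σ) ≤ 4 * (σ * (1 - σ)) := by
  have hsin : 0 < Real.sin (π * σ) :=
    Real.sin_pos_of_pos_of_lt_pi (mul_pos Real.pi_pos hσ.1) (by nlinarith [Real.pi_pos, hσ.2])
  have hreflection : Real.Gamma (σ + 1) * Real.Gamma (2 - σ) =
      σ * (1 - σ) * (π / Real.sin (π * σ)) := by
    rw [← Real.Gamma_mul_Gamma_one_sub, show 2 - σ = 1 - σ + 1 by ring,
      Real.Gamma_add_one hσ.1.ne', Real.Gamma_add_one (sub_pos.2 hσ.2).ne']
    ring
  have hmidpoint : π / 4 ≤ Real.Gamma (σ + 1) * Real.Gamma (2 - σ) := by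
    convert realGamma_midpoint_mul_self_le (a := σ + 1) (b := 2 - σ) (by linarith [hσ.1])
      (by linarith [hσ.2]) using 1
    rw [show (σ + 1 + (2 - σ)) / 2 = 3 / 2 by ring, realGamma_three_halves, div_mul_div_comm,
      Real.mul_self_sqrt Real.pi_pos.le]
    norm_num
  rw [hreflection, mul_div_assoc', le_div_iff₀ hsin] at hmidpoint
  exact le_of_mul_le_mul_left (by linarith) Real.pi_pos

lemma realEvenSymbol_one (σ : ℝ) :
    realEvenSymbol σ 1 = σ * (1 - σ) * (Real.Gamma (σ + 1) * Real.Gamma (σ + 1))⁻¹ := by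
  rw [realEvenSymbol, mul_one, Real.cos_pi, mul_inv,
    inv_realGamma_eq_mul_inv_realGamma_add_one (σ - 1), sub_add_cancel,
    inv_realGamma_eq_mul_inv_realGamma_add_one σ, mul_inv]
  ring

lemma realEvenSymbol_add_half (σ : ℝ) :
    realEvenSymbol σ (σ + 1 / 2) =
      Real.sin (π * σ) / 4 * (Real.Gamma (3 / 2) * Real.Gamma (2 * σ + 1 / 2))⁻¹ := by
  have hGamma : (Real.Gamma (-(1 / 2)))⁻¹ = -(1 / 4) * (Real.Gamma (3 / 2))⁻¹ := by
    rw [inv_realGamma_eq_mul_inv_realGamma_add_one, inv_realGamma_eq_mul_inv_realGamma_add_one]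
    norm_num
    ring
  rw [realEvenSymbol, mul_add, mul_one_div, Real.cos_add_pi_div_two, sub_add_cancel_left,
    ← add_assoc, ← two_mul, mul_inv, mul_inv, hGamma]
  ring

lemma realEvenSymbol_add_half_le_one (hσ : σ ∈ Ioo 0 1) :
    realEvenSymbol σ (σ + 1 / 2) ≤ realEvenSymbol σ 1 := by
  have hpos {t : ℝ} (ht : 0 < t) := Real.Gamma_pos_of_pos ht
  have hpos₁ := hpos (show 0 < σ + 1 by linarith [hσ.1])
  have hGamma : Real.Gamma (σ + 1) * Real.Gamma (σ + 1) ≤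
      Real.Gamma (3 / 2) * Real.Gamma (2 * σ + 1 / 2) := by
    convert realGamma_midpoint_mul_self_le (a := 3 / 2) (b := 2 * σ + 1 / 2) (by norm_num)
      (by linarith [hσ.1]) using 3 <;> ring
  rw [realEvenSymbol_one, realEvenSymbol_add_half]
  exact mul_le_mul (by linarith [sin_pi_mul_le_four_mul hσ])
    (inv_anti₀ (mul_pos hpos₁ hpos₁) hGamma) (inv_nonneg.2 (mul_nonneg (hpos (by norm_num)).le
      (hpos (by linarith [hσ.1])).le)) (mul_nonneg hσ.1.le (by linarith [hσ.2]))

lemma realEvenSymbol_three_halves (σ : ℝ) : realEvenSymbol σ (3 / 2) = 0 := by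
  rw [realEvenSymbol, show π * (3 / 2) = π / 2 + π by ring, Real.cos_add_pi, Real.cos_pi_div_two,
    neg_zero, zero_mul]

lemma realEvenSymbol_min_add_half_le (hσ : 0 < σ) :
    realEvenSymbol σ (min σ 1 + 1 / 2) ≤ max 0 (realEvenSymbol σ 1) := by
  rcases lt_or_ge σ 1 with hσ1 | hσ1
  · rw [min_eq_left hσ1.le]
    exact (realEvenSymbol_add_half_le_one ⟨hσ, hσ1⟩).trans (le_max_right _ _)
  · rw [min_eq_right hσ1, show (1 : ℝ) + 1 / 2 = 3 / 2 by norm_num, realEvenSymbol_three_halves]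
    exact le_max_left _ _

end RightEdge

section LevelCurve

lemma continuousOn_of_pos_left_of_neg_right {T X : Type*} [TopologicalSpace T] [LinearOrder X]
    [TopologicalSpace X] [OrderTopology X] [DenselyOrdered X] {S : Set T} {g : T → X → ℝ}
    {c : T → X} {l r : X} (hc : ∀ t ∈ S, c t ∈ Ioo l r)
    (hg : ∀ x ∈ Ioo l r, ContinuousOn (fun t => g t x) S)
    (hpos : ∀ t ∈ S, ∀ x ∈ Ioo l (c t), 0 < g t x)
    (hneg : ∀ t ∈ S, ∀ x ∈ Ioo (c t) r, g t x < 0) : ContinuousOn c S := by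
  refine fun t ht => tendsto_order.2 ⟨fun a ha => ?_, fun a ha => ?_⟩
  · obtain ⟨x, hax, hxc⟩ := exists_between (max_lt ha (hc t ht).1)
    have hlx := (le_max_right a l).trans_lt hax
    have hxr := hxc.trans (hc t ht).2
    filter_upwards [(hg x ⟨hlx, hxr⟩ t ht).eventually_const_lt (hpos t ht x ⟨hlx, hxc⟩),
      self_mem_nhdsWithin] with u hu huS
    refine (le_max_left a l).trans_lt hax |>.trans_le (not_lt.1 fun hux => ?_)
    exact hu.not_gt (hneg u huS x ⟨hux, hxr⟩)
  · obtain ⟨x, hcx, hxa⟩ := exists_between (lt_min ha (hc t ht).2)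
    have hxr := hxa.trans_le (min_le_right a r)
    have hlx := (hc t ht).1.trans hcx
    filter_upwards [(hg x ⟨hlx, hxr⟩ t ht).eventually_lt_const (hneg t ht x ⟨hcx, hxr⟩),
      self_mem_nhdsWithin] with u hu huS
    refine (not_lt.1 fun hxu => ?_ : c u ≤ x).trans_lt (hxa.trans_le (min_le_left a r))
    exact hu.not_gt (hpos u huS x ⟨hlx, hxu⟩)

variable {σ y : ℝ}

lemma evenSymbol_eq_norm_of_phase_eq_two_pi (hy : 0 < y) {x : ℝ} (hx : phase σ y x = 2 * π) :
    evenSymbol σ (x + y * I) = ‖evenSymbol σ (x + y * I)‖ := by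
  refine ext ?_ ?_
  · rw [re_evenSymbol hy, hx, Real.cos_two_pi, mul_one, ofReal_re]
  · rw [im_evenSymbol hy, hx, Real.sin_two_pi, mul_zero, neg_zero, ofReal_im]

lemma exists_phase_eq_two_pi (hy : 0 < y) (hσ : σ ∈ Ioo (1 / 2) (3 / 2)) :
    ∃ x ∈ Ioo (min σ 1) (min σ 1 + 1 / 2), phase σ y x = 2 * π := by
  have hmono := (phase_strictMono hy σ).monotone
  have hright := phase_min_add_half_mem_Ioo hy hσ
  have hcont : Continuous fun x : ℝ => (evenSymbol σ (x + y * I)).im :=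
    continuous_im.comp (by fun_prop)
  have him_left := im_evenSymbol_pos hy (pi_lt_phase hy hσ.1 le_rfl)
    (phase_lt_two_pi hy hσ.1 (min_le_right _ _))
  have him_right := im_evenSymbol_neg hy hright.1 hright.2
  obtain ⟨x, hx, him⟩ := intermediate_value_Ioo' (le_add_of_nonneg_right one_half_pos.le)
    hcont.continuousOn ⟨him_right, him_left⟩
  refine ⟨x, hx, le_antisymm (not_lt.1 fun hlt => ?_) (not_lt.1 fun hgt => ?_)⟩
  · exact (im_evenSymbol_neg hy hlt ((hmono hx.2.le).trans_lt hright.2)).ne him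
  · exact (im_evenSymbol_pos hy (pi_lt_phase hy hσ.1 hx.1.le) hgt).ne' him

lemma continuousOn_of_phase_eq_two_pi (hσ : σ ∈ Ioo (1 / 2) (3 / 2)) {c : ℝ → ℝ}
    (hc : ∀ y ∈ Ioi 0, c y ∈ Ioo (min σ 1) (min σ 1 + 1 / 2))
    (hphase : ∀ y ∈ Ioi 0, phase σ y (c y) = 2 * π) : ContinuousOn c (Ioi 0) := by
  refine continuousOn_of_pos_left_of_neg_right
    (g := fun y x : ℝ => (evenSymbol σ (x + y * I)).im) hc (fun x _ => ?_) (fun y hy x hx => ?_)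
    fun y hy x hx => ?_
  · exact (continuous_im.comp (by fun_prop)).continuousOn
  · exact im_evenSymbol_pos hy (pi_lt_phase hy hσ.1 hx.1.le)
      ((phase_strictMono hy σ hx.2).trans_eq (hphase y hy))
  · exact im_evenSymbol_neg hy ((hphase y hy).symm.trans_lt (phase_strictMono hy σ hx.1))
      ((phase_strictMono hy σ hx.2).trans (phase_min_add_half_mem_Ioo hy hσ).2)

lemma exists_levelCurve (hσ : σ ∈ Ioo (1 / 2) (3 / 2)) :
    ∃ c : ℝ → ℝ, ContinuousOn c (Ioi 0) ∧
      (∀ y ∈ Ioi 0, c y ∈ Ioo (min σ 1) (min σ 1 + 1 / 2)) ∧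
      ∀ y ∈ Ioi 0, evenSymbol σ (c y + y * I) = ‖evenSymbol σ (c y + y * I)‖ := by
  choose! c hc hphase using fun y (hy : y ∈ Ioi (0 : ℝ)) => exists_phase_eq_two_pi hy hσ
  exact ⟨c, continuousOn_of_phase_eq_two_pi hσ hc hphase, hc,
    fun y hy => evenSymbol_eq_norm_of_phase_eq_two_pi hy (hphase y hy)⟩

lemma exists_evenSymbol_eq_of_forall_lt (hσ : σ ∈ Ioo (1 / 2) (3 / 2)) {C : ℝ}
    (hC : ∀ x ∈ Icc (min σ 1) (min σ 1 + 1 / 2), realEvenSymbol σ x < C) :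
    ∃ w : ℂ, w.re ∈ Ioo (min σ 1) (min σ 1 + 1 / 2) ∧ evenSymbol σ w = C := by
  obtain ⟨c, hcont, hc, hnorm⟩ := exists_levelCurve hσ
  have hcont_norm : ContinuousOn (fun y => ‖evenSymbol σ (c y + y * I)‖) (Ioi 0) := by
    fun_prop
  have hsmall : ∀ᶠ y in 𝓝[>] 0, ‖evenSymbol σ (c y + y * I)‖ < C := by
    have huniform : ∀ᶠ y : ℝ in 𝓝 0, ∀ x ∈ Icc (min σ 1) (min σ 1 + 1 / 2),
        (evenSymbol σ (x + y * I)).re < C := by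
      refine isCompact_Icc.eventually_forall_of_forall_eventually fun x hx => ?_
      have hre : Continuous fun p : ℝ × ℝ => (evenSymbol σ (p.2 + p.1 * I)).re :=
        continuous_re.comp (by fun_prop)
      refine hre.continuousAt.eventually_lt_const ?_
      simpa [← ofReal_realEvenSymbol] using hC x hx
    filter_upwards [huniform.filter_mono nhdsWithin_le_nhds, self_mem_nhdsWithin] with y hlt hy
    have := hlt (c y) (Ioo_subset_Icc_self (hc y hy))
    rwa [hnorm y hy, ofReal_re] at this
  have hlarge : ∀ᶠ y : ℝ in atTop, C < ‖evenSymbol σ (c y + y * I)‖ := by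
    have hends : Tendsto (fun y : ℝ => (c y + y * I : ℂ)) atTop
        (stripEnds (min σ 1) (min σ 1 + 1 / 2)) := by
      refine tendsto_stripEnds_iff.2 ⟨by simpa using tendsto_abs_atTop_atTop, ?_⟩
      filter_upwards [eventually_gt_atTop 0] with y hy
      simpa using Ioo_subset_Icc_self (hc y hy)
    exact ((tendsto_norm_evenSymbol_stripEnds σ _ _).comp hends).eventually_gt_atTop C
  obtain ⟨y, hy, hyC⟩ := isPreconnected_Ioi.intermediate_value₂_eventually₂
    (l₁ := 𝓝[>] (0 : ℝ)) (l₂ := atTop) (le_principal_iff.2 self_mem_nhdsWithin)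
    (le_principal_iff.2 (Ioi_mem_atTop 0)) hcont_norm continuousOn_const
    (hsmall.mono fun _ => le_of_lt) (hlarge.mono fun _ => le_of_lt)
  exact ⟨c y + y * I, by simpa using hc y hy, by rw [hnorm y hy, hyC]⟩

lemma exists_evenSymbol_eq_of_le_realEvenSymbol (hσ : σ ∈ Ioo (1 / 2) (3 / 2)) {b C : ℝ}
    (hb : b ∈ Icc (min σ 1) (min σ 1 + 1 / 2)) (hC : 0 < C) (hCb : C ≤ realEvenSymbol σ b) :
    ∃ w : ℂ, w.re ∈ Ioo (min σ 1) (min σ 1 + 1 / 2) ∧ evenSymbol σ w = C := by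
  have hleft : realEvenSymbol σ (min σ 1) ≤ 0 :=
    realEvenSymbol_nonpos ⟨le_min hσ.1.le (by norm_num), by linarith [min_le_right σ 1]⟩
      (min_le_left _ _)
  have hright := realEvenSymbol_min_add_half_le (one_half_pos.trans hσ.1)
  obtain ⟨b', hb', hCb'⟩ : ∃ b' ∈ Ico (min σ 1) (min σ 1 + 1 / 2), C ≤ realEvenSymbol σ b' := by
    rcases hb.2.eq_or_lt with rfl | hlt
    · refine ⟨1, ⟨min_le_right _ _, ?_⟩, (le_max_iff.1 (hCb.trans hright)).resolve_left hC.not_ge⟩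
      rw [← sub_lt_iff_lt_add]
      exact lt_min (by linarith [hσ.1]) (by norm_num)
    · exact ⟨b, ⟨hb.1, hlt⟩, hCb⟩
  obtain ⟨x, hx, hxC⟩ := intermediate_value_Ioc hb'.1
    (continuous_realEvenSymbol σ).continuousOn ⟨hleft.trans_lt hC, hCb'⟩
  exact ⟨x, ⟨hx.1, hx.2.trans_lt hb'.2⟩, by rw [← ofReal_realEvenSymbol, hxC]⟩

lemma exists_evenSymbol_eq (hσ : σ ∈ Ioo (1 / 2) (3 / 2)) {C : ℝ} (hC : 0 < C) :
    ∃ w : ℂ, w.re ∈ Ioo (min σ 1) (min σ 1 + 1 / 2) ∧ evenSymbol σ w = C := by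
  by_cases h : ∀ x ∈ Icc (min σ 1) (min σ 1 + 1 / 2), realEvenSymbol σ x < C
  · exact exists_evenSymbol_eq_of_forall_lt hσ h
  · push Not at h
    obtain ⟨b, hb, hCb⟩ := h
    exact exists_evenSymbol_eq_of_le_realEvenSymbol hσ hb hC hCb

end LevelCurve

section MellinSymbol

variable {s : ℝ} {β : ℂ}

lemma analyticAt_Gamma_of_ne_zero {z : ℂ} (hz : Gamma z ≠ 0) : AnalyticAt ℂ Gamma z := by
  simpa using (differentiable_one_div_Gamma.analyticAt z).fun_inv (inv_ne_zero hz)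

lemma Gamma_add_one_ne_zero_of_neg_one_lt_re (hβ : -1 < β.re) : Gamma (β + 1) ≠ 0 :=
  Gamma_ne_zero_of_re_pos (by simpa using neg_lt_iff_pos_add.1 hβ)

lemma analyticAt_Gamma_add_one_of_neg_one_lt_re (hβ : -1 < β.re) :
    AnalyticAt ℂ (fun z => Gamma (z + 1)) β :=
  (analyticAt_Gamma_of_ne_zero (Gamma_add_one_ne_zero_of_neg_one_lt_re hβ)).comp
    (f := fun z : ℂ => z + 1) (by fun_prop)

lemma dense_setOf_Gamma_sub_ne_zero (a : ℂ) : Dense {z | Gamma (a - z) ≠ 0} := by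
  refine ((countable_range fun m : ℕ => a + m).mono ?_ : {z | Gamma (a - z) = 0}.Countable)
    |>.dense_compl ℝ
  rintro z hz
  obtain ⟨m, hm⟩ := (Gamma_eq_zero_iff _).1 hz
  exact ⟨m, by linear_combination hm⟩

-- At the zeros of the sine both sides vanish, since `Γ` takes the value `0` at its poles.
lemma inv_Gamma_one_sub_mul_sin {z : ℂ} (hz : Gamma (1 - z) ≠ 0) :
    (Gamma (1 - z) * sin (π * z))⁻¹ = Gamma z / π := by
  have hpi : (π : ℂ) ≠ 0 := ofReal_ne_zero.2 Real.pi_ne_zero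
  rw [eq_div_of_mul_eq hz (Gamma_mul_Gamma_one_sub z), div_right_comm, div_right_comm _ (sin _),
    div_self hpi, one_div, mul_comm, mul_inv, div_eq_mul_inv]

lemma evenSymbol_add_half_sub_one (s : ℝ) :
    evenSymbol (s + 1 / 2) ((s + 1 / 2 : ℝ) - 1) = sin (π * s) / Gamma (2 * s) := by
  have hcos : cos (π * ((s + 1 / 2 : ℝ) - 1)) = sin (π * s) := by
    rw [← cos_sub_pi_div_two]
    push_cast
    ring_nf
  rw [evenSymbol, invGammaPair, hcos, sub_sub_cancel, Gamma_one, one_mul, div_eq_mul_inv]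
  push_cast
  ring_nf

lemma evenSymbol_add_half (s : ℝ) (β : ℂ) :
    evenSymbol (s + 1 / 2) (β - s + 1 / 2) =
      -sin (π * (β - s)) * (Gamma (2 * s - β) * Gamma (β + 1))⁻¹ := by
  rw [evenSymbol, invGammaPair, mul_add, mul_one_div, cos_add_pi_div_two]
  push_cast
  ring_nf

lemma fNeumann_eq (hs : s ∈ Ioo 0 1) (hβ : 2 * s - 1 < β.re) :
    fNeumann s β = (Gamma (2 * s - β) * Gamma (β + 1)) ^ 2 / π *
      (evenSymbol (s + 1 / 2) (β - s + 1 / 2) -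
        evenSymbol (s + 1 / 2) ((s + 1 / 2 : ℝ) - 1)) := by
  have hsin : sin (π * s : ℂ) ≠ 0 := by
    rw [← ofReal_mul, ← ofReal_sin, ofReal_ne_zero]
    exact (Real.sin_pos_of_pos_of_lt_pi (mul_pos Real.pi_pos hs.1)
      (by nlinarith [Real.pi_pos, hs.2])).ne'
  have hreflection := inv_Gamma_one_sub_mul_sin (z := 2 * s - β)
    (Gamma_ne_zero_of_re_pos (by simpa using by linarith))
  rw [show (π : ℂ) * (2 * s - β) = -(π * (β - 2 * s)) by ring, sin_neg,
    show (1 : ℂ) - (2 * s - β) = β - 2 * s + 1 by ring, mul_neg, inv_neg] at hreflection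
  have hcancel : (Gamma (2 * s - β) * Gamma (β + 1)) ^ 2 *
      (Gamma (2 * s - β) * Gamma (β + 1))⁻¹ = Gamma (2 * s - β) * Gamma (β + 1) := by
    rw [pow_two, mul_self_mul_inv]
  rw [evenSymbol_add_half_sub_one, evenSymbol_add_half, fNeumann, div_eq_mul_inv _ (_ * sin _),
    neg_eq_iff_eq_neg.1 hreflection]
  generalize Gamma (2 * s - β) = a, Gamma (β + 1) = b at hcancel ⊢
  field_simp
  linear_combination sin (π * (β - s)) * hcancel

lemma eventually_fNeumann_eq (hs : s ∈ Ioo 0 1) (hβ : 2 * s - 1 < β.re) :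
    ∀ᶠ z in 𝓝 β, fNeumann s z = (Gamma (2 * s - z) * Gamma (z + 1)) ^ 2 / π *
      (evenSymbol (s + 1 / 2) (z - s + 1 / 2) -
        evenSymbol (s + 1 / 2) ((s + 1 / 2 : ℝ) - 1)) :=
  (continuous_re.continuousAt.eventually_const_lt hβ).mono fun _ => fNeumann_eq hs

lemma analyticAt_fNeumann (hs : s ∈ Ioo 0 1) (hβ : 2 * s - 1 < β.re)
    (hΓ : Gamma (2 * s - β) ≠ 0) : AnalyticAt ℂ (fNeumann s) β := by
  have hleft : AnalyticAt ℂ (fun z => Gamma (2 * s - z)) β :=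
    (analyticAt_Gamma_of_ne_zero hΓ).comp (f := fun z : ℂ => 2 * s - z) (by fun_prop)
  have hright := analyticAt_Gamma_add_one_of_neg_one_lt_re (β := β) (by linarith [hs.1])
  have hE : AnalyticAt ℂ (fun z => evenSymbol (s + 1 / 2) (z - s + 1 / 2)) β :=
    ((differentiable_evenSymbol _).analyticAt _).comp
      (f := fun z : ℂ => z - s + 1 / 2) (by fun_prop)
  exact ((((hleft.mul hright).pow 2).div_const).mul (hE.sub analyticAt_const)).congr
    ((eventually_fNeumann_eq hs hβ).mono fun _ => Eq.symm)

-- Clearing the possible double pole of `Γ(2s - β)²` gives an identity that passes to the limit.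
lemma fNeumann_mul_inv_Gamma_sq_eq (hs : s ∈ Ioo 0 1) (hβ : 2 * s - 1 < β.re)
    (hcont : ContinuousAt (fNeumann s) β) :
    fNeumann s β * (Gamma (2 * s - β))⁻¹ ^ 2 = Gamma (β + 1) ^ 2 / π *
      (evenSymbol (s + 1 / 2) (β - s + 1 / 2) -
        evenSymbol (s + 1 / 2) ((s + 1 / 2 : ℝ) - 1)) := by
  have hinv : Continuous fun z => (Gamma (2 * s - z))⁻¹ :=
    differentiable_one_div_Gamma.continuous.comp (continuous_const.sub continuous_id)
  have hGamma := analyticAt_Gamma_add_one_of_neg_one_lt_re (β := β) (by linarith [hs.1])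
  have hE : Continuous fun z => evenSymbol (s + 1 / 2) (z - s + 1 / 2) := by fun_prop
  have hfreq : ∃ᶠ z in 𝓝 β, Gamma (2 * s - z) ≠ 0 :=
    mem_closure_iff_frequently.1 (dense_setOf_Gamma_sub_ne_zero _ β)
  refine tendsto_nhds_unique_of_frequently_eq (hcont.fun_mul (hinv.continuousAt.fun_pow 2))
    (((hGamma.continuousAt.fun_pow 2).div_const _).fun_mul
      (hE.continuousAt.fun_sub continuousAt_const))
    ((hfreq.and_eventually (eventually_fNeumann_eq hs hβ)).mono ?_)
  rintro z ⟨hz, heq⟩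
  rw [heq]
  field_simp

lemma isZeroOf_fNeumann_iff (hs : s ∈ Ioo 0 1) (hβ : 2 * s - 1 < β.re) :
    IsZeroOf (fNeumann s) β ↔ evenSymbol (s + 1 / 2) (β - s + 1 / 2) =
      evenSymbol (s + 1 / 2) ((s + 1 / 2 : ℝ) - 1) := by
  refine ⟨fun ⟨hf, hzero⟩ => ?_, fun h => ⟨analyticAt_fNeumann hs hβ fun hΓ => ?_, ?_⟩⟩
  · have hGamma := Gamma_add_one_ne_zero_of_neg_one_lt_re (β := β) (by linarith [hs.1])
    have h := fNeumann_mul_inv_Gamma_sq_eq hs hβ hf.continuousAt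
    rw [hzero, zero_mul] at h
    exact sub_eq_zero.1 ((mul_eq_zero.1 h.symm).resolve_left
      (div_ne_zero (pow_ne_zero 2 hGamma) (ofReal_ne_zero.2 Real.pi_ne_zero)))
  · have hne := (realEvenSymbol_sub_one_pos (σ := s + 1 / 2)
      ⟨by linarith [hs.1], by linarith [hs.2]⟩).ne'
    rw [evenSymbol_add_half, hΓ, zero_mul, inv_zero, mul_zero] at h
    rw [← ofReal_ne_zero, ofReal_realEvenSymbol, ofReal_sub, ofReal_one] at hne
    exact hne h.symm
  · rw [fNeumann_eq hs hβ, h, sub_self, mul_zero]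

lemma exists_strip_not_isZeroOf_fNeumann (hs : s ∈ Ioo 0 1) :
    ∃ α > 0, ∀ β : ℂ, max 0 (2 * s - 1) < β.re → β.re < min (2 * s) (s + 1 / 2) + α →
      ¬ IsZeroOf (fNeumann s) β := by
  obtain ⟨α, hα, hne⟩ := exists_strip_evenSymbol_ne (σ := s + 1 / 2)
    ⟨by linarith [hs.1], by linarith [hs.2]⟩
  refine ⟨α, hα, fun β hleft hright hzero => ?_⟩
  obtain ⟨hβ₀, hβ⟩ := max_lt_iff.1 hleft
  have hre : (β - s + 1 / 2).re = β.re - s + 1 / 2 := by simp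
  refine hne _ ?_ ?_ ((isZeroOf_fNeumann_iff hs hβ).1 hzero)
  · rw [hre, abs_lt]
    constructor <;> linarith
  · rw [hre]
    rw [← sub_lt_iff_lt_add, lt_min_iff] at hright ⊢
    constructor <;> linarith [hright.1, hright.2]

lemma exists_isZeroOf_fNeumann (hs : s ∈ Ioo 0 1) :
    ∃ β : ℂ, min (2 * s) (s + 1 / 2) < β.re ∧ β.re < min (2 * s) (s + 1 / 2) + 1 / 2 ∧
      IsZeroOf (fNeumann s) β := by
  have hσ : s + 1 / 2 ∈ Ioo (1 / 2) (3 / 2) := ⟨by linarith [hs.1], by linarith [hs.2]⟩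
  obtain ⟨w, hw, hE⟩ := exists_evenSymbol_eq hσ (realEvenSymbol_sub_one_pos hσ)
  rw [ofReal_realEvenSymbol, ofReal_sub, ofReal_one] at hE
  have hmin : min (2 * s) (s + 1 / 2) = min (s + 1 / 2) 1 + (s - 1 / 2) := by
    rw [← min_add_add_right]
    ring_nf
  have hre : (w + s - 1 / 2).re = w.re + (s - 1 / 2) := by simp [add_sub_assoc]
  have hleft : min (2 * s) (s + 1 / 2) < (w + s - 1 / 2).re := by linarith [hw.1]
  have hmax : 2 * s - 1 < min (2 * s) (s + 1 / 2) :=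
    lt_min (by linarith) (by linarith [hs.2])
  refine ⟨w + s - 1 / 2, hleft, by linarith [hw.2],
    (isZeroOf_fNeumann_iff hs (hmax.trans hleft)).2 ?_⟩
  rwa [show w + s - 1 / 2 - s + 1 / 2 = w by ring]

end MellinSymbol

end NeumannSymbol

theorem zeros_of_fNeumann (s : ℝ) (hs : s ∈ Set.Ioo (0:ℝ) 1) :
    (s ≤ 1/2 →
      (∃ α > 0, ∀ β : ℂ, 0 < β.re → β.re < 2 * s + α → ¬ IsZeroOf (fNeumann s) β) ∧
      (∃ β : ℂ, 2 * s < β.re ∧ β.re < 2 * s + 1/2 ∧ IsZeroOf (fNeumann s) β)) ∧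
    (1/2 ≤ s →
      (∃ α > 0, ∀ β : ℂ, 2 * s - 1 < β.re → β.re < s + 1/2 + α → ¬ IsZeroOf (fNeumann s) β) ∧
      (∃ β : ℂ, s + 1/2 < β.re ∧ β.re < s + 1 ∧ IsZeroOf (fNeumann s) β)) := by
  have hfree := NeumannSymbol.exists_strip_not_isZeroOf_fNeumann hs
  have hzero := NeumannSymbol.exists_isZeroOf_fNeumann hs
  refine ⟨fun h => ?_, fun h => ?_⟩
  · rw [max_eq_left (by linarith), min_eq_left (by linarith)] at hfree
    rw [min_eq_left (by linarith)] at hzero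
    exact ⟨hfree, hzero⟩
  · rw [max_eq_right (by linarith), min_eq_right (by linarith)] at hfree
    rw [min_eq_right (by linarith), add_assoc, add_halves] at hzero
    exact ⟨hfree, hzero⟩
end

section
/- Let s ∈ (1/2, 1) and let g(z) = Γ(2s−z) Γ(z+1)/Γ(2s) − sin(π(s−z))/sin(πs). Then there exists M > 0 (possibly depending on s) such that g has at least one zero in the region {z ∈ ℂ : Re z ∈ (s+1/2, s+1) and Im z ∈ [0,M]}. -/
/-!
STATEMENT 16: For s ∈ (1/2, 1), with g(z) = Γ(2s−z)Γ(z+1)/Γ(2s) − sin(π(s−z))/sin(πs),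
there exists M > 0 such that g has at least one zero (a point where g is defined,
i.e. analytic, and vanishes) in {z ∈ ℂ : Re z ∈ (s+1/2, s+1), Im z ∈ [0, M]}.
-/

noncomputable def gFun (s : ℝ) (z : ℂ) : ℂ :=
  Complex.Gamma (2 * s - z) * Complex.Gamma (z + 1) / Complex.Gamma (2 * s) -
    Complex.sin (Real.pi * (s - z)) / Complex.sin (Real.pi * s)

/-!
With `p = 2 * s`, the function `h z = (p - z) * g z` is holomorphic near the rectangle
`[s + 1/2, s + 1] × [0, M]` and real on its bottom side. If `h` had no zero there, it would have a
continuous logarithm, whose imaginary part is constant along the bottom side. Subtracting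
`log (I * (p - z))` then gives a continuous argument of `g` off the pole `p`, which passes from `0`
at the left end of the bottom side to `π` at the right end.

On the lines `re z = s + 1/2` and `re z = s + 1` the Gamma product is a positive multiple of
`(z - 1) * z` and `(z - 2) * (z - 1) * z` respectively, because `2 * s - z` is the conjugate of
`z - 1`, resp. `z - 2`. Hence `g` avoids `(-∞, 0]` on the left side and has negative real part on
the right side. On the top side the sine dominates the Gamma product for large `M` and forces
`im g < re g`, so that `g` avoids `(-∞, 0]` there too. Followed along the left and top sides, the
argument of `g` at the top right corner is less than `π`; followed up the right side, it is more
than `π / 2`. So `im g > 0` at that corner, while `im g < re g < 0` there.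
-/

section

open Complex Set
open scoped ComplexConjugate Real

theorem exists_continuousOn_exp_eq_of_contractibleSpace {X : Type*} [TopologicalSpace X] {K : Set X}
    [ContractibleSpace K] {f : X → ℂ} (hf : ContinuousOn f K) (hf₀ : ∀ x ∈ K, f x ≠ 0) :
    ∃ L : X → ℂ, ContinuousOn L K ∧ ∀ x ∈ K, exp (L x) = f x := by
  obtain ⟨x₀, ⟨H⟩⟩ := id_nullhomotopic K
  -- A contraction of `K`, run backwards, is a homotopy from a constant map to `f`; it lifts along
  -- the covering `exp`.
  let F : C(K, {z : ℂ // z ≠ 0}) :=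
    ⟨fun x ↦ ⟨f x, hf₀ x x.2⟩, (continuousOn_iff_continuous_domRestrict.mp hf).subtype_mk _⟩
  have hstart (x : K) : (F.comp H.symm.toContinuousMap) (0, x) =
      ⟨exp (log (f x₀)), exp_ne_zero _⟩ :=
    Subtype.ext <| (congr_arg (f ∘ Subtype.val) (H.symm.apply_zero x)).trans
      (exp_log (hf₀ x₀ x₀.2)).symm
  let G := isCoveringMap_exp.liftHomotopy _ (.const K (log (f x₀))) hstart
  have hG (x : K) : exp (G (1, x)) = f x := by
    have hlift : exp (G (1, x)) = F (H.symm (1, x)) := congr_arg Subtype.val <| congr_fun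
      (isCoveringMap_exp.liftHomotopy_lifts _ (.const K (log (f x₀))) hstart) (1, x)
    rw [hlift, H.symm.apply_one, ContinuousMap.id_apply]
    rfl
  refine ⟨Function.extend Subtype.val (fun x ↦ G (1, x)) 0, ?_, fun x hx ↦ ?_⟩
  · rw [continuousOn_iff_continuous_domRestrict, domRestrict_eq,
      Function.extend_comp Subtype.val_injective]
    fun_prop
  · rw [← hG ⟨x, hx⟩]
    exact congr_arg exp (Subtype.val_injective.extend_apply _ _ ⟨x, hx⟩)

theorem lt_of_isPreconnected_of_forall_ne {X α : Type*} [TopologicalSpace X] [LinearOrder α]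
    [TopologicalSpace α] [OrderClosedTopology α] {S : Set X} (hS : IsPreconnected S) {f : X → α}
    (hf : ContinuousOn f S) {c : α} (hc : ∀ x ∈ S, f x ≠ c) {x y : X} (hx : x ∈ S) (hy : y ∈ S)
    (hxc : f x < c) : f y < c := by
  by_contra! hle
  obtain ⟨z, hz, hzc⟩ := hS.intermediate_value hx hy hf ⟨hxc.le, hle⟩
  exact hc z hz hzc

theorem im_eq_of_exp_im_eq_zero {X : Type*} [TopologicalSpace X] {S : Set X}
    (hS : IsPreconnected S) {L : X → ℂ} (hL : ContinuousOn L S)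
    (hreal : ∀ x ∈ S, (exp (L x)).im = 0) {x y : X} (hx : x ∈ S) (hy : y ∈ S) :
    (L x).im = (L y).im := by
  have hdisc : IsDiscrete (AddSubgroup.zmultiples π : Set ℝ) :=
    isDiscrete_iff_discreteTopology.mpr
      (inferInstanceAs (DiscreteTopology (AddSubgroup.zmultiples π)))
  refine hS.constant_of_mapsTo hdisc (f := fun x ↦ (L x).im)
    (continuous_im.comp_continuousOn hL) (fun x hx ↦ ?_) hx hy
  have hsin : Real.sin (L x).im = 0 := by simpa [exp_im] using hreal x hx
  simpa [AddSubgroup.mem_zmultiples_iff] using Real.sin_eq_zero_iff.mp hsin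

theorem I_mul_ofReal_sub_mem_slitPlane {p : ℝ} {z : ℂ} (hz : 0 ≤ z.im) (hzp : z ≠ p) :
    I * (p - z) ∈ slitPlane := by
  rcases hz.eq_or_lt with him | him
  · right
    suffices p ≠ z.re by simpa [sub_eq_zero] using this
    rintro rfl
    exact hzp (Complex.ext (by simp) (by simp [← him]))
  · left
    simpa using him

theorem convex_reProdIm {s t : Set ℝ} (hs : Convex ℝ s) (ht : Convex ℝ t) : Convex ℝ (s ×ℂ t) :=
  (hs.is_linear_preimage reLm.isLinear).inter (ht.is_linear_preimage imLm.isLinear)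

theorem mem_slitPlane_of_im_lt_re {z : ℂ} (hz : z.im < z.re) : z ∈ slitPlane := by
  rw [mem_slitPlane_iff]
  by_contra! h
  linarith

theorem exists_log_div_ofReal_sub {K : Set ℂ} (hK : Convex ℝ K) (hK₀ : ∀ z ∈ K, 0 ≤ z.im)
    {h : ℂ → ℂ} (hh : ContinuousOn h K) (hh₀ : ∀ z ∈ K, h z ≠ 0)
    (hreal : ∀ x : ℝ, (x : ℂ) ∈ K → (h x).im = 0) {a p b : ℝ} (ha : (a : ℂ) ∈ K) (hb : (b : ℂ) ∈ K)
    (hap : a < p) (hpb : p < b) (hpos : 0 < (h a).re) :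
    ∃ Λ : ℂ → ℂ, ContinuousOn Λ (K \ {(p : ℂ)}) ∧
      (∀ z ∈ K \ {(p : ℂ)}, exp (Λ z) = h z / (p - z)) ∧ (Λ a).im = 0 ∧ (Λ b).im = π := by
  have := hK.contractibleSpace ⟨_, ha⟩
  obtain ⟨L, hL, hexp⟩ := exists_continuousOn_exp_eq_of_contractibleSpace hh hh₀
  have hbottom : (L b).im = (L a).im := by
    have hseg : IsPreconnected (K ∩ {z | z.im = 0}) :=
      (hK.inter (convex_hyperplane imLm.isLinear 0)).isPreconnected
    refine im_eq_of_exp_im_eq_zero hseg (hL.mono inter_subset_left) (fun z hz ↦ ?_)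
      ⟨hb, ofReal_im b⟩ ⟨ha, ofReal_im a⟩
    rw [hexp z hz.1]
    have hzre : (z.re : ℂ) = z := Complex.ext rfl hz.2.symm
    rw [← hzre]
    exact hreal z.re (hzre ▸ hz.1)
  have hlog_a : (log (I * (p - a))).im = π / 2 := by
    rw [log_im, mul_comm, ← ofReal_sub, arg_real_mul _ (sub_pos.mpr hap), arg_I]
  have hlog_b : (log (I * (p - b))).im = -(π / 2) := by
    rw [log_im, show I * (p - b) = (b - p : ℝ) * -I by push_cast; ring,
      arg_real_mul _ (sub_pos.mpr hpb), arg_neg_I]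
  have harg : (h a).arg = 0 := arg_eq_zero_iff.mpr ⟨hpos.le, hreal a ha⟩
  -- `I * (p - z)` lies in the closed right half-plane, and its argument drops from `π / 2` to
  -- `-π / 2` between `a` and `b`.
  refine ⟨fun z ↦ L z - L a + log (h a) - log (I * (p - z)) + π / 2 * I, ?_, fun z hz ↦ ?_, ?_, ?_⟩
  · have hslit : ∀ z ∈ K \ {(p : ℂ)}, I * (p - z) ∈ slitPlane :=
      fun z hz ↦ I_mul_ofReal_sub_mem_slitPlane (hK₀ z hz.1) hz.2
    have hlog : ContinuousOn (fun z ↦ log (I * (p - z))) (K \ {(p : ℂ)}) :=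
      ContinuousOn.clog (by fun_prop) hslit
    have := hL.mono (sdiff_subset (t := {(p : ℂ)}))
    fun_prop
  · have hpz : (p : ℂ) - z ≠ 0 := sub_ne_zero.mpr (Ne.symm hz.2)
    rw [exp_add, exp_sub, exp_add, exp_sub, hexp z hz.1, hexp a ha, exp_log (hh₀ a ha),
      exp_log (mul_ne_zero I_ne_zero hpz), exp_pi_div_two_mul_I]
    have := hh₀ a ha
    field_simp
  · simp [hlog_a, harg, log_im (h a)]
  · simp [hlog_b, harg, hbottom, log_im (h a)]

theorem exp_im_pos_of_isPreconnected {X : Type*} [TopologicalSpace X] {S T : Set X}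
    (hS : IsPreconnected S) (hT : IsPreconnected T) {L : X → ℂ} (hLS : ContinuousOn L S)
    (hLT : ContinuousOn L T) (hslit : ∀ x ∈ S, exp (L x) ∈ slitPlane)
    (hneg : ∀ x ∈ T, (exp (L x)).re < 0) {x y z : X} (hx : x ∈ S) (hyS : y ∈ S) (hyT : y ∈ T)
    (hz : z ∈ T) (hLx : (L x).im < π) (hLz : π / 2 < (L z).im) : 0 < (exp (L y)).im := by
  have hlt_pi : (L y).im < π := by
    refine lt_of_isPreconnected_of_forall_ne hS (continuous_im.comp_continuousOn hLS)
      (fun w hw hπ ↦ ?_) hx hyS hLx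
    have hπ : (L w).im = π := hπ
    simpa [mem_slitPlane_iff, exp_re, exp_im, hπ, (Real.exp_pos _).not_gt] using hslit w hw
  have hgt : π / 2 < (L y).im := by
    refine lt_of_isPreconnected_of_forall_ne (α := ℝᵒᵈ) hT (continuous_im.comp_continuousOn hLT)
      (fun w hw hπ ↦ ?_) hz hyT hLz
    have hπ : (L w).im = π / 2 := hπ
    simpa [exp_re, hπ] using hneg w hw
  rw [exp_im]
  exact mul_pos (Real.exp_pos _)
    (Real.sin_pos_of_pos_of_lt_pi (Real.pi_div_two_pos.trans hgt) hlt_pi)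

theorem exists_zero_of_convex_of_boundary_values {K S T : Set ℂ} (hK : Convex ℝ K)
    (hK₀ : ∀ z ∈ K, 0 ≤ z.im) (hS : IsPreconnected S) (hSK : S ⊆ K) (hT : IsPreconnected T)
    (hTK : T ⊆ K) {h : ℂ → ℂ} (hh : ContinuousOn h K)
    (hreal : ∀ x : ℝ, (x : ℂ) ∈ K → (h x).im = 0) {a p b : ℝ} (hap : a < p) (hpb : p < b)
    (hslit : ∀ z ∈ S, h z / (p - z) ∈ slitPlane) (hneg : ∀ z ∈ T, (h z / (p - z)).re < 0)
    (ha : (a : ℂ) ∈ S) (hb : (b : ℂ) ∈ T) {c : ℂ} (hcS : c ∈ S) (hcT : c ∈ T)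
    (hc : (h c / (p - c)).im ≤ 0) : ∃ z ∈ K, h z = 0 := by
  by_contra! hh₀
  have hpos : 0 < (h a).re := by
    have ha_slit := hslit a ha
    rw [← ofReal_sub, mem_slitPlane_iff, div_ofReal_re, div_ofReal_im, hreal a (hSK ha),
      zero_div] at ha_slit
    exact (div_pos_iff_of_pos_right (sub_pos.mpr hap)).mp (ha_slit.resolve_right (· rfl))
  obtain ⟨Λ, hΛ, hexp, hΛa, hΛb⟩ :=
    exists_log_div_ofReal_sub hK hK₀ hh hh₀ hreal (hSK ha) (hTK hb) hap hpb hpos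
  have hS_sub : S ⊆ K \ {(p : ℂ)} := fun z hz ↦ ⟨hSK hz, by
    rintro rfl
    simpa using hslit _ hz⟩
  have hT_sub : T ⊆ K \ {(p : ℂ)} := fun z hz ↦ ⟨hTK hz, by
    rintro rfl
    simpa using hneg _ hz⟩
  refine hc.not_gt ?_
  rw [← hexp c (hS_sub hcS)]
  refine exp_im_pos_of_isPreconnected hS hT (hΛ.mono hS_sub) (hΛ.mono hT_sub)
    (fun z hz ↦ ?_) (fun z hz ↦ ?_) ha hcS hcT hb (hΛa ▸ Real.pi_pos)
    (hΛb.symm ▸ half_lt_self Real.pi_pos)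
  · exact hexp z (hS_sub hz) ▸ hslit z hz
  · exact hexp z (hT_sub hz) ▸ hneg z hz

theorem exists_zero_of_rectangle_boundary {a p b M : ℝ} (hap : a < p) (hpb : p < b) (hM : 0 < M)
    {g h : ℂ → ℂ} (hg : ∀ z : ℂ, z ≠ p → g z = h z / (p - z))
    (hh : ContinuousOn h (Icc a b ×ℂ Icc 0 M)) (hreal : ∀ x ∈ Icc a b, (h (x : ℝ)).im = 0)
    (hhp : h p ≠ 0) (hleft : ∀ z ∈ {a} ×ℂ Icc 0 M, g z ∈ slitPlane)
    (htop : ∀ z ∈ Icc a b ×ℂ {M}, g z ∈ slitPlane)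
    (hright : ∀ z ∈ {b} ×ℂ Icc 0 M, (g z).re < 0) (hcorner : (g ⟨b, M⟩).im ≤ 0) :
    ∃ z ∈ Ioo a b ×ℂ Icc 0 M, z ≠ p ∧ g z = 0 := by
  have hab := (hap.trans hpb).le
  have ha : {a} ⊆ Icc a b := singleton_subset_iff.mpr (left_mem_Icc.mpr hab)
  have hb : {b} ⊆ Icc a b := singleton_subset_iff.mpr (right_mem_Icc.mpr hab)
  have hM_sub : {M} ⊆ Icc 0 M := singleton_subset_iff.mpr (right_mem_Icc.mpr hM.le)
  have hre_ne : ∀ {z : ℂ} {x : ℝ}, x ≠ p → z.re = x → z ≠ p := by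
    rintro z x hxp rfl rfl
    exact hxp (ofReal_re p)
  have him_ne : ∀ {z : ℂ}, z.im = M → z ≠ p := by
    rintro z him rfl
    exact hM.ne him
  have hconn : IsPreconnected (({a} ×ℂ Icc 0 M) ∪ (Icc a b ×ℂ {M})) :=
    IsPreconnected.union (⟨a, M⟩ : ℂ) ⟨rfl, hM_sub rfl⟩ ⟨ha rfl, rfl⟩
      (convex_reProdIm (convex_singleton a) (convex_Icc 0 M)).isPreconnected
      (convex_reProdIm (convex_Icc a b) (convex_singleton M)).isPreconnected
  have hslit : ∀ z ∈ ({a} ×ℂ Icc 0 M) ∪ (Icc a b ×ℂ {M}), h z / (p - z) ∈ slitPlane := by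
    rintro z (hz | hz)
    · exact hg z (hre_ne hap.ne hz.1) ▸ hleft z hz
    · exact hg z (him_ne hz.2) ▸ htop z hz
  obtain ⟨z, ⟨hre, him⟩, hz⟩ := exists_zero_of_convex_of_boundary_values
    (convex_reProdIm (convex_Icc a b) (convex_Icc 0 M)) (fun z hz ↦ hz.2.1) hconn
    (union_subset (fun z hz ↦ ⟨ha hz.1, hz.2⟩) fun z hz ↦ ⟨hz.1, hM_sub hz.2⟩)
    (convex_reProdIm (convex_singleton b) (convex_Icc 0 M)).isPreconnected
    (fun z hz ↦ ⟨hb hz.1, hz.2⟩) hh (fun x hx ↦ hreal x hx.1) hap hpb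
    hslit (fun z hz ↦ hg z (hre_ne hpb.ne' hz.1) ▸ hright z hz)
    (.inl ⟨ofReal_re a, left_mem_Icc.mpr hM.le⟩) ⟨ofReal_re b, left_mem_Icc.mpr hM.le⟩
    (c := ⟨b, M⟩) (.inr ⟨hb rfl, rfl⟩) ⟨rfl, hM_sub rfl⟩ (hg ⟨b, M⟩ (him_ne rfl) ▸ hcorner)
  have hzp : z ≠ p := fun hzp ↦ hhp (hzp ▸ hz)
  have hgz : g z = 0 := by rw [hg z hzp, hz, zero_div]
  refine ⟨z, ⟨?_, him⟩, hzp, hgz⟩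
  rcases eq_endpoints_or_mem_Ioo_of_mem_Icc hre with hza | hzb | hre
  · simpa [hgz] using hleft z ⟨hza, him⟩
  · simpa [hgz] using hright z ⟨hzb, him⟩
  · exact hre

theorem sin_re (z : ℂ) : (sin z).re = Real.sin z.re * Real.cosh z.im := by
  rw [sin_eq]
  simp [← ofReal_sin, ← ofReal_cos, ← ofReal_cosh, ← ofReal_sinh]

theorem sin_im (z : ℂ) : (sin z).im = Real.cos z.re * Real.sinh z.im := by
  rw [sin_eq]
  simp [← ofReal_sin, ← ofReal_cos, ← ofReal_cosh, ← ofReal_sinh]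

theorem sinh_le_sin_mul_cosh_sub_cos_mul_sinh {x y : ℝ} (hx : x ∈ Icc (π / 2) π) (hy : 0 ≤ y) :
    Real.sinh y ≤ Real.sin x * Real.cosh y - Real.cos x * Real.sinh y := by
  have hsin : 0 ≤ Real.sin x :=
    Real.sin_nonneg_of_nonneg_of_le_pi (Real.pi_div_two_pos.le.trans hx.1) hx.2
  have hcos : Real.cos x ≤ 0 :=
    Real.cos_nonpos_of_pi_div_two_le_of_le hx.1 (by linarith [hx.2, Real.pi_pos])
  have hone : 1 ≤ Real.sin x - Real.cos x := by
    nlinarith [Real.sin_sq_add_cos_sq x, mul_nonneg hsin (neg_nonneg.mpr hcos)]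
  calc Real.sinh y ≤ (Real.sin x - Real.cos x) * Real.sinh y :=
        le_mul_of_one_le_left (Real.sinh_nonneg_iff.mpr hy) hone
    _ = Real.sin x * Real.sinh y - Real.cos x * Real.sinh y := sub_mul ..
    _ ≤ Real.sin x * Real.cosh y - Real.cos x * Real.sinh y := by
        gcongr
        exact (Real.sinh_lt_cosh y).le

theorem norm_Gamma_le_Gamma_re {z : ℂ} (hz : 0 < z.re) : ‖Gamma z‖ ≤ Real.Gamma z.re := by
  rw [Gamma_eq_integral hz, Real.Gamma_eq_integral hz, GammaIntegral]
  refine (MeasureTheory.norm_integral_le_integral_norm _).trans_eq ?_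
  refine MeasureTheory.setIntegral_congr_fun measurableSet_Ioi fun x hx ↦ ?_
  rw [norm_mul, Complex.norm_of_nonneg (Real.exp_pos _).le, norm_cpow_eq_rpow_re_of_pos hx,
    sub_re, one_re]

/-- The Gamma product in `gFun`: the function `g` of the theorem without its sine term. -/
noncomputable def gammaTerm (s : ℝ) (z : ℂ) : ℂ :=
  Gamma (2 * s - z) * Gamma (z + 1) / Gamma (2 * s)

theorem gFun_eq_gammaTerm_add_sin (s : ℝ) (z : ℂ) :
    gFun s z = gammaTerm s z + sin (π * (z - s)) / Real.sin (π * s) := by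
  rw [gFun, gammaTerm, ← neg_sub z (s : ℂ), mul_neg, sin_neg, neg_div, sub_neg_eq_add]
  push_cast
  rfl

theorem gFun_re (s : ℝ) (z : ℂ) : (gFun s z).re =
    (gammaTerm s z).re + Real.sin (π * (z.re - s)) * Real.cosh (π * z.im) / Real.sin (π * s) := by
  rw [gFun_eq_gammaTerm_add_sin, add_re, div_ofReal_re, sin_re]
  simp

theorem gFun_im (s : ℝ) (z : ℂ) : (gFun s z).im =
    (gammaTerm s z).im + Real.cos (π * (z.re - s)) * Real.sinh (π * z.im) / Real.sin (π * s) := by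
  rw [gFun_eq_gammaTerm_add_sin, add_im, div_ofReal_im, sin_im]
  simp

theorem gammaTerm_of_re_eq {s : ℝ} {z : ℂ} (n : ℕ) (hz : z.re = s + n / 2)
    (hpole : ∀ m : ℕ, z - n ≠ -m) :
    gammaTerm s z =
      (‖Gamma (z - n)‖ ^ 2 / Real.Gamma (2 * s) : ℝ) * (ascPochhammer ℂ (n + 1)).eval (z - n) := by
  have hconj : 2 * s - z = conj (z - n) := by
    refine Complex.ext ?_ (by simp)
    suffices 2 * s - z.re = z.re - n by simpa
    rw [hz]
    ring
  have hshift : Gamma (z + 1) = (ascPochhammer ℂ (n + 1)).eval (z - n) * Gamma (z - n) := by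
    rw [← Gamma_add_nat_div_Gamma_eq _ hpole, div_mul_cancel₀ _ (Gamma_ne_zero hpole)]
    congr 1
    push_cast
    ring
  have hnorm := conj_mul' (Gamma (z - n))
  rw [gammaTerm, hconj, Gamma_conj, hshift, mul_left_comm, hnorm]
  push_cast [← Gamma_ofReal]
  ring

theorem sin_pi_mul_pos {s : ℝ} (hs : s ∈ Ioo 0 1) : 0 < Real.sin (π * s) :=
  Real.sin_pos_of_pos_of_lt_pi (mul_pos Real.pi_pos hs.1) (mul_lt_of_lt_one_right Real.pi_pos hs.2)

theorem norm_Gamma_sq_div_Gamma_pos {w : ℂ} (hw : ∀ m : ℕ, w ≠ -m) {x : ℝ} (hx : 0 < x) :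
    0 < ‖Gamma w‖ ^ 2 / Real.Gamma x :=
  div_pos (pow_pos (norm_pos_iff.mpr (Gamma_ne_zero hw)) 2) (Real.Gamma_pos_of_pos hx)

theorem gFun_mem_slitPlane_of_re_eq_add_half {s : ℝ} (hs : s ∈ Ioo (1 / 2) 1) {z : ℂ}
    (hre : z.re = s + 1 / 2) (him : 0 ≤ z.im) : gFun s z ∈ slitPlane := by
  have hs₀ : 0 < s := one_half_pos.trans hs.1
  have hpole (m : ℕ) : z - (1 : ℕ) ≠ -m := fun hm ↦ by
    have hsm : s + 1 / 2 - 1 = -m := by simpa [hre] using congr_arg re hm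
    linarith [hs.1, m.cast_nonneg (α := ℝ)]
  have hκ := norm_Gamma_sq_div_Gamma_pos hpole (mul_pos two_pos hs₀)
  have hgamma := gammaTerm_of_re_eq 1 (by simpa using hre) hpole
  have hangle : π * (z.re - s) = π / 2 := by rw [hre, add_sub_cancel_left, mul_one_div]
  rcases him.eq_or_lt with him | him
  · left
    have hprod : 0 < ((ascPochhammer ℂ 2).eval (z - (1 : ℕ))).re := by
      suffices 0 < (s + 1 / 2 - 1) * (s + 1 / 2) by simpa [ascPochhammer_succ_eval, hre, ← him]
      exact mul_pos (by linarith [hs.1]) (by linarith)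
    have hsin := sin_pi_mul_pos ⟨hs₀, hs.2⟩
    rw [gFun_re, hgamma, re_ofReal_mul, hangle, Real.sin_pi_div_two]
    positivity
  · right
    have hprod : ((ascPochhammer ℂ 2).eval (z - (1 : ℕ))).im = 2 * s * z.im := by
      simp only [Nat.cast_one, ascPochhammer_succ_eval, ascPochhammer_one, Polynomial.eval_X,
        sub_add_cancel, mul_im, sub_re, hre, one_re, sub_im, one_im, sub_zero]
      ring
    rw [gFun_im, hgamma, im_ofReal_mul, hangle, Real.cos_pi_div_two, hprod, zero_mul, zero_div,
      add_zero]
    positivity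

theorem gFun_re_neg_of_re_eq_add_one {s : ℝ} (hs : s ∈ Ioo 0 1) {z : ℂ} (hre : z.re = s + 1) :
    (gFun s z).re < 0 := by
  have hs₀ : 0 < s := hs.1
  have hpole (m : ℕ) : z - (2 : ℕ) ≠ -m := fun hm ↦ by
    have hsm : s + 1 - 2 = -m := by simpa [hre] using congr_arg re hm
    have hm₀ : (0 : ℝ) < m := by linarith [hs.2]
    have hm₁ : (m : ℝ) < 1 := by linarith
    norm_cast at hm₀ hm₁
    lia
  have hκ := norm_Gamma_sq_div_Gamma_pos hpole (mul_pos two_pos hs₀)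
  have hprod : ((ascPochhammer ℂ 3).eval (z - (2 : ℕ))).re =
      -(1 - s) * s * (s + 1) - 3 * s * z.im ^ 2 := by
    simp only [Nat.cast_ofNat, ascPochhammer_succ_eval, ascPochhammer_one, Polynomial.eval_X,
      Nat.cast_one, sub_add_cancel, mul_re, sub_re, hre, re_ofNat, add_re, one_re, sub_im,
      im_ofNat, sub_zero, add_im, one_im, add_zero, mul_im]
    ring
  have hneg : -(1 - s) * s * (s + 1) - 3 * s * z.im ^ 2 < 0 := by
    have := mul_pos (mul_pos (sub_pos.mpr hs.2) hs₀) (add_pos hs₀ one_pos)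
    have := mul_nonneg hs₀.le (sq_nonneg z.im)
    linarith
  rw [gFun_re, gammaTerm_of_re_eq 2 (by simpa using hre) hpole, re_ofReal_mul, hprod, hre,
    add_sub_cancel_left, mul_one, Real.sin_pi, zero_mul, zero_div, add_zero]
  exact mul_neg_of_pos_of_neg hκ hneg

theorem norm_gammaTerm_le {s : ℝ} {z : ℂ} (hre : z.re ∈ Ioo (-1) (2 * s + 1)) (him : 1 ≤ |z.im|) :
    ‖gammaTerm s z‖ ≤
      Real.Gamma (2 * s - z.re + 1) * Real.Gamma (z.re + 1) / ‖Gamma (2 * s)‖ := by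
  have hnorm : 1 ≤ ‖2 * s - z‖ := him.trans <| by simpa using abs_im_le_norm (2 * s - z)
  have hne : (2 * s - z : ℂ) ≠ 0 := norm_pos_iff.mp (one_pos.trans_le hnorm)
  have hleft : ‖Gamma (2 * s - z)‖ ≤ Real.Gamma (2 * s - z.re + 1) := calc
    ‖Gamma (2 * s - z)‖ ≤ ‖2 * s - z‖ * ‖Gamma (2 * s - z)‖ :=
        le_mul_of_one_le_left (norm_nonneg _) hnorm
    _ = ‖Gamma (2 * s - z + 1)‖ := by rw [Gamma_add_one _ hne, norm_mul]
    _ ≤ Real.Gamma (2 * s - z.re + 1) := by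
        have hpos : 0 < (2 * s - z + 1).re := by
          suffices 0 < 2 * s - z.re + 1 by simpa
          linarith [hre.2]
        simpa using norm_Gamma_le_Gamma_re hpos
  have hright : ‖Gamma (z + 1)‖ ≤ Real.Gamma (z.re + 1) := by
    have hpos : 0 < (z + 1).re := by
      suffices 0 < z.re + 1 by simpa
      linarith [hre.1]
    simpa using norm_Gamma_le_Gamma_re hpos
  rw [gammaTerm, norm_div, norm_mul]
  gcongr
  exact (norm_nonneg _).trans hleft

theorem exists_norm_gammaTerm_le {s a b : ℝ} (ha : -1 < a) (hb : b < 2 * s + 1) :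
    ∃ C : ℝ, ∀ z : ℂ, z.re ∈ Icc a b → 1 ≤ |z.im| → ‖gammaTerm s z‖ ≤ C := by
  have hcont : ContinuousOn (fun x ↦ Real.Gamma (2 * s - x + 1) * Real.Gamma (x + 1) /
      ‖Gamma (2 * s)‖) (Icc a b) := by
    have hΓ := Real.differentiableOn_Gamma_Ioi.continuousOn
    refine .div_const (.mul (hΓ.comp (by fun_prop) fun x hx ↦ ?_)
      (hΓ.comp (by fun_prop) fun x hx ↦ ?_)) _
    · rw [mem_Ioi]
      linarith [hx.2]
    · rw [mem_Ioi]
      linarith [hx.1]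
  obtain ⟨C, hC⟩ := isCompact_Icc.bddAbove_image hcont
  exact ⟨C, fun z hre him ↦ (norm_gammaTerm_le ⟨ha.trans_le hre.1, hre.2.trans_lt hb⟩ him).trans
    (hC (mem_image_of_mem _ hre))⟩

theorem exists_gFun_im_lt_re {s : ℝ} (hs : s ∈ Ioo 0 1) :
    ∃ M > 0, ∀ z : ℂ, z.re ∈ Icc (s + 1 / 2) (s + 1) → z.im = M →
      (gFun s z).im < (gFun s z).re := by
  obtain ⟨C, hC⟩ := exists_norm_gammaTerm_le (s := s) (a := s + 1 / 2) (b := s + 1)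
    (by linarith [hs.1]) (by linarith [hs.1])
  set M := max 1 (2 * C + 1)
  have hM : 0 < M := one_pos.trans_le (le_max_left ..)
  refine ⟨M, hM, fun z hre him ↦ ?_⟩
  have hnorm := hC z hre (by rw [him, abs_of_pos hM]; exact le_max_left ..)
  set x := π * (z.re - s)
  have hx : x ∈ Icc (π / 2) π := by
    constructor <;> nlinarith [Real.pi_pos, hre.1, hre.2]
  set σ := Real.sin (π * s)
  have hσ : 0 < σ := sin_pi_mul_pos hs
  have hsin : M ≤ Real.sin x * Real.cosh (π * M) - Real.cos x * Real.sinh (π * M) := calc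
    M ≤ π * M := le_mul_of_one_le_left hM.le (by linarith [Real.pi_gt_three])
    _ ≤ Real.sinh (π * M) := Real.self_le_sinh_iff.mpr (by positivity)
    _ ≤ _ := sinh_le_sin_mul_cosh_sub_cos_mul_sinh hx (by positivity)
  have hdiv : M ≤ Real.sin x * Real.cosh (π * M) / σ - Real.cos x * Real.sinh (π * M) / σ := by
    rw [← sub_div]
    exact hsin.trans (le_div_self (hM.le.trans hsin) hσ (Real.sin_le_one _))
  rw [gFun_re, gFun_im, him]
  linarith [abs_le.mp (abs_re_le_norm (gammaTerm s z)), abs_le.mp (abs_im_le_norm (gammaTerm s z)),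
    le_max_right 1 (2 * C + 1)]

/-- The product `(2 * s - z) * gFun s z` with its removable singularity at `z = 2 * s` filled in,
using `w * Γ w = Γ (w + 1)` at `w = 2 * s - z`. -/
noncomputable def gFunReg (s : ℝ) (z : ℂ) : ℂ :=
  Gamma (2 * s - z + 1) * Gamma (z + 1) / Gamma (2 * s) +
    (2 * s - z) * sin (π * (z - s)) / sin (π * s)

theorem gFun_eq_gFunReg_div {s : ℝ} {z : ℂ} (hz : z ≠ (2 * s : ℝ)) :
    gFun s z = gFunReg s z / ((2 * s : ℝ) - z) := by
  have hz₀ : 2 * s - z ≠ 0 := sub_ne_zero.mpr (by simpa using hz.symm)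
  rw [gFun_eq_gammaTerm_add_sin, gammaTerm, gFunReg, Gamma_add_one _ hz₀]
  push_cast
  field_simp

theorem gFunReg_ofReal_im (s x : ℝ) : (gFunReg s x).im = 0 := by
  have hreal : gFunReg s x =
      (Real.Gamma (2 * s - x + 1) * Real.Gamma (x + 1) / Real.Gamma (2 * s) +
        (2 * s - x) * Real.sin (π * (x - s)) / Real.sin (π * s) : ℝ) := by
    push_cast [gFunReg, ← Gamma_ofReal]
    rfl
  rw [hreal, ofReal_im]

theorem gFunReg_two_mul_ne_zero {s : ℝ} (hs : 0 < s) : gFunReg s (2 * s : ℝ) ≠ 0 := by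
  have hval : gFunReg s (2 * s : ℝ) = Gamma (2 * s + 1) / Gamma (2 * s) := by simp [gFunReg]
  rw [hval, Gamma_add_one _ (by simpa using hs.ne'), mul_div_cancel_right₀]
  · simpa using hs.ne'
  · exact Gamma_ne_zero_of_re_pos (by simpa using hs)

theorem differentiableOn_gFunReg (s : ℝ) :
    DifferentiableOn ℂ (gFunReg s) (re ⁻¹' Ioo (-1) (2 * s + 1)) := by
  rintro z ⟨hz₁, hz₂⟩
  have hΓ {w : ℂ} (hw : 0 < w.re) : DifferentiableAt ℂ Gamma w :=
    differentiableAt_Gamma w fun m hm ↦ by simp [hm, m.cast_nonneg.not_gt] at hw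
  have h₁ : DifferentiableAt ℂ (fun z ↦ Gamma (2 * s - z + 1)) z :=
    .comp z (hΓ <| by simpa using by linarith) (by fun_prop)
  have h₂ : DifferentiableAt ℂ (fun z ↦ Gamma (z + 1)) z :=
    .comp z (hΓ <| by simpa using by linarith) (by fun_prop)
  unfold gFunReg
  exact DifferentiableAt.differentiableWithinAt (by fun_prop)

theorem analyticAt_gFun {s : ℝ} {z : ℂ} (hz : z.re ∈ Ioo (-1) (2 * s + 1)) (hzs : z ≠ (2 * s : ℝ)) :
    AnalyticAt ℂ (gFun s) z := by
  have hreg : AnalyticAt ℂ (gFunReg s) z := (differentiableOn_gFunReg s).analyticAt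
    ((isOpen_Ioo.preimage continuous_re).mem_nhds hz)
  have hquot : AnalyticAt ℂ (fun w ↦ gFunReg s w / ((2 * s : ℝ) - w)) z :=
    hreg.div (by fun_prop) (sub_ne_zero.mpr hzs.symm)
  refine hquot.congr ?_
  filter_upwards [isOpen_ne.mem_nhds hzs] with w hw
  exact (gFun_eq_gFunReg_div hw).symm

end

theorem gFun_exists_zero_high_s (s : ℝ) (hs : s ∈ Set.Ioo (1/2 : ℝ) 1) :
    ∃ M > 0, ∃ z : ℂ, z.re ∈ Set.Ioo (s + 1/2) (s + 1) ∧
      z.im ∈ Set.Icc (0 : ℝ) M ∧ AnalyticAt ℂ (gFun s) z ∧ gFun s z = 0 := by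
  have hs₀ : s ∈ Set.Ioo 0 1 := ⟨one_half_pos.trans hs.1, hs.2⟩
  have hstrip : Set.Icc (s + 1 / 2) (s + 1) ⊆ Set.Ioo (-1) (2 * s + 1) := fun x hx ↦
    ⟨by linarith [hx.1, hs₀.1], by linarith [hx.2, hs₀.1]⟩
  obtain ⟨M, hM, htop⟩ := exists_gFun_im_lt_re hs₀
  obtain ⟨z, ⟨hre, him⟩, hzs, hz⟩ := exists_zero_of_rectangle_boundary (g := gFun s)
    (h := gFunReg s) (a := s + 1 / 2) (p := 2 * s) (b := s + 1) (by linarith [hs.1])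
    (by linarith [hs.2]) hM (fun z ↦ gFun_eq_gFunReg_div)
    ((differentiableOn_gFunReg s).continuousOn.mono fun z hz ↦ hstrip hz.1)
    (fun x _ ↦ gFunReg_ofReal_im s x) (gFunReg_two_mul_ne_zero hs₀.1)
    (fun z hz ↦ gFun_mem_slitPlane_of_re_eq_add_half hs hz.1 hz.2.1)
    (fun z hz ↦ mem_slitPlane_of_im_lt_re (htop z hz.1 hz.2))
    (fun z hz ↦ gFun_re_neg_of_re_eq_add_one hs₀ hz.1)
    ((htop ⟨s + 1, M⟩ (Set.right_mem_Icc.mpr (by linarith)) rfl).trans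
      (gFun_re_neg_of_re_eq_add_one hs₀ rfl)).le
  exact ⟨M, hM, z, hre, him, analyticAt_gFun (hstrip (Set.Ioo_subset_Icc_self hre)) hzs, hz⟩
end

section
/- Let s ∈ (0, 1/2) and let g(z) = Γ(2s−z) Γ(z+1)/Γ(2s) − sin(π(s−z))/sin(πs). Then there exists M > 0 (possibly depending on s) such that g has at least one zero in the region {z ∈ ℂ : Re z ∈ (2s, 2s+1/2) and Im z ∈ [0,M]}. -/
/-!
Put `z = 2 * s + t`. By the reflection formula, `gFun s z = 0` amounts to
`cos (π s + 2 π t) = W`, where `W = cos (π s) - 2 π sin (π s) / B(1 + t, 2 s)`. Expanding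
`(1 - x) ^ (2 s - 1)` in the Beta integral gives `B(u, 2 s) = ∑ cₙ / (u + n)` with `cₙ ≥ 0`, so for
`t` in the closed first quadrant `1 / B` has positive real part, nonnegative imaginary part and at
most quadratic growth. Hence `W` lies in the quadrant `re w < cos (π s)`, `im w ≤ 0`, while
`cos` maps no boundary point of the half strip `π s < re u < π`, `0 < im u` into the interior of
that quadrant, and on a high horizontal edge it is larger than `W`. The equation `cos u = w` is
solvable for one constant `w` in the quadrant, and deforming `w` linearly to `W` cannot lose the
solution through the boundary of the rectangle.
-/

open Complex Set Filter Topology MeasureTheory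
open scoped Real

section ZeroContinuation

variable {E : Type*} [NormedAddCommGroup E] [NormedSpace ℂ E] [Nontrivial E] {U : Set E}

lemma exists_zero_of_norm_lt_of_forall_mem_frontier_le {f : E → ℂ} {c : ℝ} {u : E}
    (hU : Bornology.IsBounded U) (hf : DiffContOnCl ℂ f U) (hu : u ∈ closure U)
    (hfu : ‖f u‖ < c) (hc : ∀ v ∈ frontier U, c ≤ ‖f v‖) :
    ∃ v ∈ closure U, f v = 0 := by
  by_contra! hne
  have hc0 : 0 < c := (norm_nonneg _).trans_lt hfu
  have hle : ‖(f u)⁻¹‖ ≤ c⁻¹ :=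
    norm_le_of_forall_mem_frontier_norm_le hU (hf.inv hne)
      (fun v hv => by rw [Pi.inv_apply, norm_inv]; exact inv_anti₀ hc0 (hc v hv)) hu
  rw [norm_inv, inv_le_inv₀ (norm_pos_iff.2 (hne u hu)) hc0] at hle
  exact hle.not_gt hfu

lemma isCompact_setOf_exists_eq {X Y Z : Type*} [TopologicalSpace X] [TopologicalSpace Y]
    [TopologicalSpace Z] [T1Space Z] {F : X → Y → Z} {S : Set X} {K : Set Y} (hS : IsCompact S)
    (hK : IsCompact K) (hF : ContinuousOn F.uncurry (S ×ˢ K)) (c : Z) :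
    IsCompact {x | x ∈ S ∧ ∃ y ∈ K, F x y = c} := by
  obtain ⟨C, hC, hCF⟩ := continuousOn_iff_isClosed.1 hF {c} isClosed_singleton
  have hcompact : IsCompact (F.uncurry ⁻¹' {c} ∩ S ×ˢ K) := by
    rw [hCF]
    exact (hS.prod hK).inter_left hC
  convert hcompact.image continuous_fst using 1
  ext x
  constructor
  · rintro ⟨hx, y, hy, hxy⟩
    exact ⟨(x, y), ⟨hxy, hx, hy⟩, rfl⟩
  · rintro ⟨⟨x, y⟩, ⟨hxy, hx, hy⟩, rfl⟩
    exact ⟨hx, y, hy, hxy⟩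

theorem exists_zero_of_homotopy [ProperSpace E] {F : ℝ → E → ℂ} (hU : Bornology.IsBounded U)
    (hF : ContinuousOn F.uncurry (Icc 0 1 ×ˢ closure U))
    (hd : ∀ l ∈ Icc (0 : ℝ) 1, DifferentiableOn ℂ (F l) U)
    (hfr : ∀ l ∈ Ico (0 : ℝ) 1, ∀ u ∈ frontier U, F l u ≠ 0)
    (h0 : ∃ u ∈ closure U, F 0 u = 0) :
    ∃ u ∈ closure U, F 1 u = 0 := by
  have hK : IsCompact (closure U) := hU.isCompact_closure
  have hdc : ∀ l ∈ Icc (0 : ℝ) 1, DiffContOnCl ℂ (F l) U := fun l hl =>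
    ⟨hd l hl, hF.comp (f := fun u => (l, u)) (by fun_prop) fun u hu => ⟨hl, hu⟩⟩
  suffices Icc (0 : ℝ) 1 ⊆ {l | ∃ u ∈ closure U, F l u = 0} from this (right_mem_Icc.2 zero_le_one)
  refine IsClosed.Icc_subset_of_forall_mem_nhdsWithin ?_ h0 ?_
  · rw [inter_comm]
    exact (isCompact_setOf_exists_eq isCompact_Icc hK hF 0).isClosed
  rintro l ⟨⟨u, hu, hlu⟩, hl⟩
  have hl' : l ∈ Icc (0 : ℝ) 1 := Ico_subset_Icc_self hl
  obtain ⟨m, hm, hmin⟩ : ∃ m > 0, ∀ v ∈ frontier U, m ≤ ‖F l v‖ :=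
    (hK.of_isClosed_subset isClosed_frontier frontier_subset_closure).exists_forall_le'
      ((hdc l hl').continuousOn.mono frontier_subset_closure).norm
      fun v hv => norm_pos_iff.2 (hfr l hl v hv)
  obtain ⟨V, hV, hclose⟩ :=
    hK.mem_uniformity_of_prod hF hl' (Metric.dist_mem_uniformity (half_pos hm))
  have hIcc : Icc (0 : ℝ) 1 ∈ 𝓝[>] l := Icc_mem_nhdsGT_of_mem hl
  filter_upwards [nhdsWithin_le_of_mem hIcc hV, hIcc] with k hkV hk
  have hdist : ∀ v ∈ closure U, ‖F k v - F l v‖ < m / 2 := fun v hv =>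
    dist_eq_norm (F k v) (F l v) ▸ hclose k hkV v hv
  refine exists_zero_of_norm_lt_of_forall_mem_frontier_le hU (hdc k hk) hu (c := m / 2) ?_ ?_
  · simpa [hlu] using hdist u hu
  · intro v hv
    have htri := norm_sub_norm_le (F l v) (F k v)
    rw [norm_sub_rev] at htri
    linarith [hmin v hv, hdist v (frontier_subset_closure hv)]

end ZeroContinuation

section Cosine

lemma re_cos (z : ℂ) : (cos z).re = Real.cos z.re * Real.cosh z.im := by
  rw [cos_eq, ← ofReal_cos, ← ofReal_cosh, ← ofReal_sin, ← ofReal_sinh]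
  simp [-ofReal_cos, -ofReal_sin, -ofReal_cosh, -ofReal_sinh]

lemma im_cos (z : ℂ) : (cos z).im = -(Real.sin z.re * Real.sinh z.im) := by
  rw [cos_eq, ← ofReal_cos, ← ofReal_cosh, ← ofReal_sin, ← ofReal_sinh]
  simp [-ofReal_cos, -ofReal_sin, -ofReal_cosh, -ofReal_sinh]

lemma normSq_cos (z : ℂ) : normSq (cos z) = Real.cos z.re ^ 2 + Real.sinh z.im ^ 2 := by
  rw [normSq_apply, re_cos, im_cos]
  linear_combination Real.cos z.re ^ 2 * Real.cosh_sq z.im +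
    Real.sinh z.im ^ 2 * Real.sin_sq_add_cos_sq z.re

lemma sinh_im_le_norm_cos (z : ℂ) : Real.sinh z.im ≤ ‖cos z‖ := by
  apply le_of_sq_le_sq _ (norm_nonneg _)
  rw [← normSq_eq_norm_sq, normSq_cos]
  exact le_add_of_nonneg_left (sq_nonneg _)

/-- The part `re w < cos a`, `im w ≤ 0` of the disc `‖w‖ < sinh H`, in which the right-hand side of
the equation `cos u = w` may vary without a solution `u` leaving the rectangle with vertices
`a`, `π`, `π + i H`, `a + i H`. -/
def cosQuadrant (a H : ℝ) : Set ℂ :=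
  {w | w.re < Real.cos a ∧ w.im ≤ 0 ∧ ‖w‖ < Real.sinh H}

lemma convex_cosQuadrant (a H : ℝ) : Convex ℝ (cosQuadrant a H) := by
  have hball : Convex ℝ {w : ℂ | ‖w‖ < Real.sinh H} := by
    simpa [Metric.ball, dist_zero_right] using convex_ball (0 : ℂ) (Real.sinh H)
  exact (convex_halfSpace_re_lt _).inter ((convex_halfSpace_im_le 0).inter hball)

variable {a H : ℝ} {u : ℂ}

lemma cos_notMem_cosQuadrant_of_re_eq (ha : 0 ≤ Real.cos a) (hu : u.re = a) :
    cos u ∉ cosQuadrant a H := fun h => by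
  have hlt : Real.cos a * Real.cosh u.im < Real.cos a := by simpa [re_cos, hu] using h.1
  exact hlt.not_ge (le_mul_of_one_le_right ha (Real.one_le_cosh _))

lemma cos_notMem_cosQuadrant_of_im_eq (hu : u.im = H) : cos u ∉ cosQuadrant a H := fun h =>
  h.2.2.not_ge (hu ▸ sinh_im_le_norm_cos u)

lemma im_cos_eq_zero_of_mem_frontier (ha : a < π) (ha' : 0 ≤ Real.cos a) (hH : 0 < H)
    (hu : u ∈ frontier (Ioo a π ×ℂ Ioo 0 H)) (hcos : cos u ∈ cosQuadrant a H) :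
    (cos u).im = 0 := by
  rw [frontier_reProdIm, frontier_Ioo ha, frontier_Ioo hH] at hu
  rcases hu with ⟨-, bottom | top⟩ | ⟨left | right, -⟩
  · simp_all [im_cos]
  · exact absurd hcos (cos_notMem_cosQuadrant_of_im_eq top)
  · exact absurd hcos (cos_notMem_cosQuadrant_of_re_eq ha' left)
  · simp_all [im_cos]

lemma im_cos_neg_of_re_mem_Ioo (hre : u.re ∈ Ioo 0 π) (him : 0 < u.im) : (cos u).im < 0 := by
  rw [im_cos]
  exact neg_neg_of_pos (mul_pos (Real.sin_pos_of_mem_Ioo hre) (Real.sinh_pos_iff.2 him))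

lemma cos_mem_cosQuadrant_of_re_eq_pi_div_two (ha : 0 < Real.cos a) (hu : u.re = π / 2)
    (him : u.im ∈ Ico 0 H) : cos u ∈ cosQuadrant a H := by
  have hre0 : (cos u).re = 0 := by simp [re_cos, hu]
  have hsinh : 0 ≤ Real.sinh u.im := Real.sinh_nonneg_iff.2 him.1
  refine ⟨hre0.trans_lt ha, by simpa [im_cos, hu] using him.1, ?_⟩
  rw [← abs_im_eq_norm.2 hre0, im_cos, hu]
  simpa [abs_of_nonneg hsinh] using him.2

lemma cos_ne_of_mem_frontier (ha : a < π) (ha' : 0 ≤ Real.cos a) (hH : 0 < H)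
    (hu : u ∈ frontier (Ioo a π ×ℂ Ioo 0 H)) {w₀ w : ℂ} (hw₀ : w₀ ∈ cosQuadrant a H)
    (hw₀im : w₀.im < 0) (hw : w ∈ cosQuadrant a H) {l : ℝ} (hl : l ∈ Ico 0 1) :
    cos u ≠ (1 - l) • w₀ + l • w := by
  intro heq
  have hmem : cos u ∈ cosQuadrant a H :=
    heq ▸ convex_cosQuadrant a H hw₀ hw (by linarith [hl.2]) hl.1 (sub_add_cancel 1 l)
  have him := im_cos_eq_zero_of_mem_frontier ha ha' hH hu hmem
  rw [heq, add_im, smul_im, smul_im, smul_eq_mul, smul_eq_mul] at him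
  nlinarith [hw.2.1, hl.1, hl.2]

theorem exists_cos_eq_of_forall_mem_cosQuadrant {W : ℂ → ℂ} (ha : a ∈ Ioo (-(π / 2)) (π / 2))
    (hH : 0 < H) (hW : DiffContOnCl ℂ W (Ioo a π ×ℂ Ioo 0 H))
    (hmem : ∀ u ∈ closure (Ioo a π ×ℂ Ioo 0 H), W u ∈ cosQuadrant a H) :
    ∃ u, u.re ∈ Ioc a π ∧ u.im ∈ Icc 0 H ∧ cos u = W u := by
  set U := Ioo a π ×ℂ Ioo 0 H
  have haπ : a < π := by linarith [ha.2, Real.pi_pos]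
  have hcos : 0 < Real.cos a := Real.cos_pos_of_mem_Ioo ha
  have hU : Bornology.IsBounded U := (Metric.isBounded_Ioo _ _).reProdIm (Metric.isBounded_Ioo _ _)
  have hcl : closure U = Icc a π ×ℂ Icc 0 H := by
    rw [closure_reProdIm, closure_Ioo haπ.ne, closure_Ioo hH.ne]
  set u₀ : ℂ := ⟨π / 2, H / 2⟩
  have hu₀ : u₀ ∈ U := ⟨⟨ha.2, half_lt_self Real.pi_pos⟩, half_pos hH, half_lt_self hH⟩
  have hu₀mem : cos u₀ ∈ cosQuadrant a H :=
    cos_mem_cosQuadrant_of_re_eq_pi_div_two hcos rfl (Ioo_subset_Ico_self hu₀.2)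
  have hu₀im : (cos u₀).im < 0 :=
    im_cos_neg_of_re_mem_Ioo ⟨half_pos Real.pi_pos, hu₀.1.2⟩ hu₀.2.1
  have hcont : ContinuousOn (fun x : ℝ × ℂ => cos x.2 - ((1 - x.1) • cos u₀ + x.1 • W x.2))
      (Icc 0 1 ×ˢ closure U) := by
    have hWc : ContinuousOn (fun x : ℝ × ℂ => W x.2) (Icc 0 1 ×ˢ closure U) :=
      hW.continuousOn.comp continuousOn_snd fun x hx => hx.2
    exact (Continuous.continuousOn (by fun_prop)).sub
      ((Continuous.continuousOn (by fun_prop)).add (continuousOn_fst.smul hWc))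
  have hdiff (l : ℝ) : DifferentiableOn ℂ (fun u => cos u - ((1 - l) • cos u₀ + l • W u)) U := by
    have hWd := hW.differentiableOn
    fun_prop
  obtain ⟨u, hu, hzero⟩ := exists_zero_of_homotopy
    (F := fun l u => cos u - ((1 - l) • cos u₀ + l • W u)) hU hcont (fun l _ => hdiff l)
    (fun l hl u hu => sub_ne_zero.2 <| cos_ne_of_mem_frontier haπ hcos.le hH hu hu₀mem hu₀im
      (hmem u (frontier_subset_closure hu)) hl)
    ⟨u₀, subset_closure hu₀, by simp⟩
  have heq : cos u = W u := by simpa [sub_eq_zero] using hzero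
  have hne : u.re ≠ a := fun h =>
    cos_notMem_cosQuadrant_of_re_eq hcos.le h (heq ▸ hmem u hu)
  rw [hcl] at hu
  exact ⟨u, ⟨hu.1.1.lt_of_ne hne.symm, hu.1.2⟩, hu.2, heq⟩

end Cosine

section Beta

lemma multichoose_nonneg {a : ℝ} (ha : 0 ≤ a) (n : ℕ) : 0 ≤ Ring.multichoose a n := by
  rcases ha.eq_or_lt with rfl | ha
  · cases n <;> simp
  have hfac := Ring.factorial_nsmul_multichoose_eq_ascPochhammer a n
  rw [Polynomial.ascPochhammer_smeval_eq_eval, nsmul_eq_mul] at hfac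
  exact (pos_of_mul_pos_right (hfac ▸ ascPochhammer_pos n a ha) (by positivity)).le

lemma hasSum_multichoose_mul_pow (a : ℝ) {x : ℝ} (hx : |x| < 1) :
    HasSum (fun n => Ring.multichoose a n * x ^ n) ((1 - x) ^ (-a)) := by
  have hsum := (Real.one_div_one_sub_rpow_hasFPowerSeriesOnBall_zero a).hasSum (y := x)
    (by simpa [Metric.mem_eball, edist_dist] using hx)
  rw [zero_add, one_div, ← Real.rpow_neg (by linarith [(abs_lt.1 hx).2])] at hsum
  simpa [FormalMultilinearSeries.ofScalars_apply_eq, mul_comm, Ring.multichoose_eq] using hsum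

lemma integral_cpow_sub_one_mul_pow {u : ℂ} (hu : 0 < u.re) (n : ℕ) :
    ∫ x in Ioo (0 : ℝ) 1, (x : ℂ) ^ (u - 1) * (x : ℂ) ^ n = (u + n)⁻¹ := by
  have hun : 0 < (u + n).re := by
    simp only [add_re, natCast_re]
    positivity
  rw [← one_div, ← betaIntegral_eval_one_right hun, betaIntegral,
    intervalIntegral.integral_of_le zero_le_one, integral_Ioc_eq_integral_Ioo]
  refine setIntegral_congr_fun measurableSet_Ioo fun x hx => ?_
  have hx0 : (x : ℂ) ≠ 0 := ofReal_ne_zero.2 hx.1.ne'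
  rw [← cpow_natCast, ← cpow_add _ _ hx0, add_sub_right_comm]
  simp

variable {a : ℝ} {u : ℂ}

theorem hasSum_betaIntegral (ha : a ∈ Ioc (0 : ℝ) 1) (hu : 0 < u.re) :
    HasSum (fun n : ℕ => ((Ring.multichoose (1 - a) n : ℝ) : ℂ) * (u + n)⁻¹)
      (betaIntegral u a) := by
  have hbinom (x : ℝ) (hx : x ∈ Ioo 0 1) :
      HasSum (fun n => Ring.multichoose (1 - a) n * x ^ n) ((1 - x) ^ (a - 1)) :=
    neg_sub 1 a ▸ hasSum_multichoose_mul_pow (1 - a) (abs_lt.2 ⟨by linarith [hx.1], hx.2⟩)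
  have hterm (n : ℕ) (x : ℝ) (hx : x ∈ Ioo 0 1) : 0 ≤ Ring.multichoose (1 - a) n * x ^ n :=
    mul_nonneg (multichoose_nonneg (sub_nonneg.2 ha.2) n) (pow_nonneg hx.1.le n)
  have hbeta (x : ℝ) (hx : x ∈ Ioo 0 1) :
      (1 - (x : ℂ)) ^ ((a : ℂ) - 1) = ((1 - x) ^ (a - 1) : ℝ) := by
    rw [ofReal_cpow (sub_nonneg.2 hx.2.le)]
    push_cast
    rfl
  have hint : IntegrableOn (fun x : ℝ => (x : ℂ) ^ (u - 1) * (1 - (x : ℂ)) ^ ((a : ℂ) - 1))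
      (Ioo 0 1) := by
    rw [← integrableOn_Ioc_iff_integrableOn_Ioo, ← uIoc_of_le zero_le_one,
      ← intervalIntegrable_iff]
    exact betaIntegral_convergent hu (by simpa using ha.1)
  rw [betaIntegral, intervalIntegral.integral_of_le zero_le_one, integral_Ioc_eq_integral_Ioo]
  convert! hasSum_integral_of_dominated_convergence (μ := volume.restrict (Ioo (0 : ℝ) 1))
    (F := fun (n : ℕ) x => (x : ℂ) ^ (u - 1) * ((Ring.multichoose (1 - a) n * x ^ n : ℝ) : ℂ))
    (fun (n : ℕ) x => ‖(x : ℂ) ^ (u - 1)‖ * (Ring.multichoose (1 - a) n * x ^ n)) ?_ ?_ ?_ ?_ ?_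
    using 2 with n
  · rw [← integral_cpow_sub_one_mul_pow hu n, ← integral_const_mul]
    push_cast
    simp only [mul_left_comm]
  · exact fun n => Measurable.aestronglyMeasurable (by fun_prop)
  · refine fun n => ae_restrict_of_forall_mem measurableSet_Ioo fun x hx => ?_
    rw [norm_mul, norm_real, Real.norm_of_nonneg (hterm n x hx)]
  · exact ae_restrict_of_forall_mem measurableSet_Ioo fun x hx =>
      (hbinom x hx).summable.mul_left _
  · refine hint.norm.congr (ae_restrict_of_forall_mem measurableSet_Ioo fun x hx => ?_)
    dsimp only
    rw [((hbinom x hx).mul_left _).tsum_eq, norm_mul, hbeta x hx, norm_real,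
      Real.norm_of_nonneg ((hbinom x hx).nonneg fun n => hterm n x hx)]
  · refine ae_restrict_of_forall_mem measurableSet_Ioo fun x hx => ?_
    rw [hbeta x hx]
    exact (hasSum_ofReal.2 (hbinom x hx)).mul_left _

lemma re_inv_le_re_betaIntegral (ha : a ∈ Ioc (0 : ℝ) 1) (hu : 0 < u.re) :
    u⁻¹.re ≤ (betaIntegral u a).re := by
  have hsum := hasSum_re (hasSum_betaIntegral ha hu)
  simpa using le_hasSum hsum 0 fun n _ => by
    rw [re_ofReal_mul, inv_re, add_re, natCast_re]
    exact mul_nonneg (multichoose_nonneg (sub_nonneg.2 ha.2) n)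
      (div_nonneg (by positivity) (normSq_nonneg _))

lemma re_betaIntegral_pos (ha : a ∈ Ioc (0 : ℝ) 1) (hu : 0 < u.re) :
    0 < (betaIntegral u a).re := by
  have hu0 : u ≠ 0 := by rintro rfl; simp at hu
  refine lt_of_lt_of_le ?_ (re_inv_le_re_betaIntegral ha hu)
  rw [inv_re]
  exact div_pos hu (normSq_pos.2 hu0)

lemma im_betaIntegral_nonpos (ha : a ∈ Ioc (0 : ℝ) 1) (hu : 0 < u.re) (hu' : 0 ≤ u.im) :
    (betaIntegral u a).im ≤ 0 := by
  refine hasSum_le (fun n => ?_) (hasSum_im (hasSum_betaIntegral ha hu)) hasSum_zero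
  rw [im_ofReal_mul, inv_im, add_im, natCast_im, add_zero]
  exact mul_nonpos_of_nonneg_of_nonpos (multichoose_nonneg (sub_nonneg.2 ha.2) n)
    (div_nonpos_of_nonpos_of_nonneg (neg_nonpos.2 hu') (normSq_nonneg _))

lemma norm_inv_betaIntegral_le (ha : a ∈ Ioc (0 : ℝ) 1) (hu : 0 < u.re) :
    ‖(betaIntegral u a)⁻¹‖ ≤ ‖u‖ ^ 2 / u.re := by
  have hu0 : u ≠ 0 := by rintro rfl; simp at hu
  have hnorm : 0 < ‖u‖ := norm_pos_iff.2 hu0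
  rw [norm_inv, ← inv_div]
  refine inv_anti₀ (div_pos hu (pow_pos hnorm 2)) ?_
  rw [← normSq_eq_norm_sq, ← inv_re]
  exact (re_inv_le_re_betaIntegral ha hu).trans (re_le_norm _)

lemma analyticAt_Gamma {z : ℂ} (hz : ∀ m : ℕ, z ≠ -m) : AnalyticAt ℂ Gamma z := by
  simpa [Pi.inv_def] using
    (differentiable_one_div_Gamma.analyticAt z).inv (inv_ne_zero (Gamma_ne_zero hz))

lemma analyticAt_Gamma_of_re_pos {z : ℂ} (hz : 0 < z.re) : AnalyticAt ℂ Gamma z :=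
  analyticAt_Gamma fun m hm => by
    rw [hm, neg_re, natCast_re] at hz
    exact hz.not_ge (neg_nonpos.2 m.cast_nonneg)

lemma differentiableAt_betaIntegral {v : ℂ} (hu : 0 < u.re) (hv : 0 < v.re) :
    DifferentiableAt ℂ (fun u => betaIntegral u v) u := by
  have huv : 0 < (u + v).re := add_pos hu hv
  have hquot : (fun u => betaIntegral u v) =ᶠ[𝓝 u] fun u => Gamma u * Gamma v / Gamma (u + v) := by
    filter_upwards [(isOpen_lt continuous_const continuous_re).mem_nhds hu] with w hw
    exact betaIntegral_eq_Gamma_mul_div w v hw hv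
  refine DifferentiableAt.congr_of_eventuallyEq ?_ hquot
  exact ((analyticAt_Gamma_of_re_pos hu).differentiableAt.mul_const _).div
    ((analyticAt_Gamma_of_re_pos huv).differentiableAt.comp u (by fun_prop))
    (Gamma_ne_zero_of_re_pos huv)

end Beta

lemma eventually_eval_lt_sinh (p : Polynomial ℝ) : ∀ᶠ x in atTop, p.eval x < Real.sinh x := by
  filter_upwards [(2 * p + 1).tendsto_div_exp_atTop.eventually_lt_const one_pos,
    eventually_ge_atTop 0] with x hx hx0
  rw [div_lt_one (Real.exp_pos x)] at hx
  simp only [Polynomial.eval_add, Polynomial.eval_mul, Polynomial.eval_ofNat,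
    Polynomial.eval_one] at hx
  have hexp : Real.exp (-x) ≤ 1 := Real.exp_le_one_iff.2 (neg_nonpos.2 hx0)
  rw [Real.sinh_eq]
  linarith

section CosineEquation

/-- With `z = 2 * s + t`, the equation `gFun s z = 0` reads
`cos (π * s + 2 * π * t) = cosTarget s t`. -/
noncomputable def cosTarget (s : ℝ) (t : ℂ) : ℂ :=
  (Real.cos (π * s) : ℂ) - (2 * π * Real.sin (π * s) : ℝ) * (betaIntegral (1 + t) (2 * s : ℝ))⁻¹

variable {s : ℝ} {t : ℂ}

lemma mem_integerComplement_of_re_mem_Ioo (ht : t.re ∈ Ioo 0 1) : t ∈ integerComplement := by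
  rintro ⟨k, rfl⟩
  rw [intCast_re] at ht
  have h0 : 0 < k := Int.cast_pos.1 ht.1
  have h1 : k < 1 := by exact_mod_cast ht.2
  lia

lemma gFun_two_mul_add (hs : 0 < s) (ht : -1 < t.re) :
    gFun s (2 * s + t) = sin (π * (s + t)) / sin (π * s) -
      π / sin (π * t) * (betaIntegral (1 + t) (2 * s : ℝ))⁻¹ := by
  have ht1 : 0 < (1 + t).re := by simpa using by linarith
  have hs2 : 0 < ((2 * s : ℝ) : ℂ).re := by simpa using hs
  have hΓ : Gamma (1 + t) ≠ 0 := Gamma_ne_zero_of_re_pos ht1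
  have hreflect : Gamma (-t) * Gamma (1 + t) = -(π / sin (π * t)) := by
    simpa [div_neg] using Gamma_mul_Gamma_one_sub (-t)
  rw [betaIntegral_eq_Gamma_mul_div _ _ ht1 hs2, ← neg_eq_iff_eq_neg.2 hreflect, gFun,
    show 2 * s - (2 * s + t) = -t by ring, show 2 * s + t + 1 = 1 + t + 2 * s by ring,
    show (π : ℂ) * (s - (2 * s + t)) = -(π * (s + t)) by ring, sin_neg]
  push_cast
  field_simp
  ring

lemma gFun_two_mul_add_eq_zero (hs : 0 < s) (ht : -1 < t.re) (hsin : sin (π * s) ≠ 0)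
    (hsint : sin (π * t) ≠ 0) (h : cos (π * s + 2 * π * t) = cosTarget s t) :
    gFun s (2 * s + t) = 0 := by
  have hprod : cos (π * s) - cos (π * s + 2 * π * t) = 2 * (sin (π * (s + t)) * sin (π * t)) := by
    rw [cos_sub_cos, show (π * s + (π * s + 2 * π * t)) / 2 = π * (s + t) by ring,
      show (π * s - (π * s + 2 * π * t)) / 2 = -(π * t) by ring, sin_neg]
    ring
  rw [h, cosTarget] at hprod
  push_cast at hprod
  rw [gFun_two_mul_add hs ht, ofReal_mul, ofReal_ofNat]
  set b := (betaIntegral (1 + t) (2 * s))⁻¹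
  field_simp
  linear_combination -hprod / 2

lemma analyticAt_gFun_two_mul_add (ht : t ∈ integerComplement) (h : 0 < (2 * s + t + 1).re) :
    AnalyticAt ℂ (gFun s) (2 * s + t) := by
  have hΓ₁ : AnalyticAt ℂ (fun z : ℂ => Gamma (2 * s - z)) (2 * s + t) := by
    refine (analyticAt_Gamma fun m hm => ht ⟨m, ?_⟩).comp (by fun_prop)
    rw [sub_add_cancel_left, neg_inj] at hm
    exact_mod_cast hm.symm
  have hΓ₂ : AnalyticAt ℂ (fun z : ℂ => Gamma (z + 1)) (2 * s + t) :=
    (analyticAt_Gamma_of_re_pos h).comp (f := fun z : ℂ => z + 1) (by fun_prop)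
  have hsin : AnalyticAt ℂ (fun z : ℂ => sin (π * (s - z))) (2 * s + t) := by fun_prop
  exact ((hΓ₁.mul hΓ₂).div_const).sub hsin.div_const

lemma re_cosTarget_lt (hs : s ∈ Ioc (0 : ℝ) (1 / 2)) (ht : -1 < t.re) :
    (cosTarget s t).re < Real.cos (π * s) := by
  have hsin : 0 < Real.sin (π * s) :=
    Real.sin_pos_of_pos_of_lt_pi (mul_pos Real.pi_pos hs.1) (by nlinarith [hs.2, Real.pi_pos])
  have hre : 0 < (betaIntegral (1 + t) (2 * s : ℝ)).re :=
    re_betaIntegral_pos ⟨by linarith [hs.1], by linarith [hs.2]⟩ (by simpa using by linarith)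
  have hinv : 0 < (betaIntegral (1 + t) (2 * s : ℝ))⁻¹.re := by
    rw [inv_re]
    exact div_pos hre (normSq_pos.2 fun h => hre.ne' (h ▸ zero_re))
  rw [cosTarget, sub_re, ofReal_re, re_ofReal_mul]
  exact sub_lt_self _ (by positivity)

lemma im_cosTarget_nonpos (hs : s ∈ Ioc (0 : ℝ) (1 / 2)) (ht : -1 < t.re) (ht' : 0 ≤ t.im) :
    (cosTarget s t).im ≤ 0 := by
  have hsin : 0 ≤ Real.sin (π * s) :=
    Real.sin_nonneg_of_nonneg_of_le_pi (mul_nonneg Real.pi_pos.le hs.1.le)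
      (by nlinarith [hs.2, Real.pi_pos])
  have him : (betaIntegral (1 + t) (2 * s : ℝ)).im ≤ 0 :=
    im_betaIntegral_nonpos ⟨by linarith [hs.1], by linarith [hs.2]⟩ (by simpa using by linarith)
      (by simpa using ht')
  have hinv : 0 ≤ (betaIntegral (1 + t) (2 * s : ℝ))⁻¹.im := by
    rw [inv_im]
    exact div_nonneg (neg_nonneg.2 him) (normSq_nonneg _)
  rw [cosTarget, sub_im, ofReal_im, im_ofReal_mul, zero_sub]
  exact neg_nonpos.2 (by positivity)

lemma norm_cosTarget_le (hs : s ∈ Ioc (0 : ℝ) (1 / 2)) (ht : -1 < t.re) :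
    ‖cosTarget s t‖ ≤ 1 + 2 * π * (‖1 + t‖ ^ 2 / (1 + t.re)) := by
  have hinv : ‖(betaIntegral (1 + t) (2 * s : ℝ))⁻¹‖ ≤ ‖1 + t‖ ^ 2 / (1 + t.re) := by
    simpa using norm_inv_betaIntegral_le (u := 1 + t) (a := 2 * s)
      ⟨by linarith [hs.1], by linarith [hs.2]⟩ (by simpa using by linarith)
  have hcos : ‖(Real.cos (π * s) : ℂ)‖ ≤ 1 := (norm_real _).trans_le (Real.abs_cos_le_one _)
  have hsin : ‖((2 * π * Real.sin (π * s) : ℝ) : ℂ)‖ ≤ 2 * π := by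
    rw [norm_real, norm_mul, Real.norm_of_nonneg Real.two_pi_pos.le]
    exact mul_le_of_le_one_right Real.two_pi_pos.le (Real.abs_sin_le_one _)
  refine (norm_sub_le _ _).trans (add_le_add hcos ?_)
  rw [norm_mul]
  gcongr

lemma differentiableAt_cosTarget (hs : s ∈ Ioc (0 : ℝ) (1 / 2)) (ht : -1 < t.re) :
    DifferentiableAt ℂ (cosTarget s) t := by
  have ht1 : 0 < (1 + t).re := by simpa using by linarith
  have hs2 : 0 < ((2 * s : ℝ) : ℂ).re := by simpa using hs.1
  have hre : 0 < (betaIntegral (1 + t) (2 * s : ℝ)).re :=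
    re_betaIntegral_pos ⟨by linarith [hs.1], by linarith [hs.2]⟩ ht1
  have hbeta : DifferentiableAt ℂ (fun t => betaIntegral (1 + t) (2 * s : ℝ)) t :=
    (differentiableAt_betaIntegral ht1 hs2).comp t (by fun_prop)
  exact ((hbeta.inv fun h => hre.ne' (h ▸ zero_re)).const_mul _).const_sub _

lemma exists_forall_cosTarget_mem_cosQuadrant (hs : s ∈ Ioc (0 : ℝ) (1 / 2)) :
    ∃ H > 0, ∀ t : ℂ, t.re ∈ Icc 0 1 → t.im ∈ Icc 0 H → cosTarget s t ∈ cosQuadrant (π * s) H := by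
  obtain ⟨H, hH, hH0⟩ : ∃ H, 1 + 2 * π * (2 + H) ^ 2 < Real.sinh H ∧ 0 < H := by
    have hgrowth := eventually_eval_lt_sinh (1 + Polynomial.C (2 * π) * (2 + Polynomial.X) ^ 2)
    simpa using (hgrowth.and (eventually_gt_atTop 0)).exists
  refine ⟨H, hH0, fun t hre him => ?_⟩
  have ht : -1 < t.re := by linarith [hre.1]
  have hnorm : ‖1 + t‖ ≤ 2 + H := calc
    ‖1 + t‖ ≤ ‖(1 : ℂ)‖ + (|t.re| + |t.im|) :=
      norm_add_le_of_le le_rfl (norm_le_abs_re_add_abs_im t)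
    _ ≤ 2 + H := by
      rw [norm_one, abs_of_nonneg hre.1, abs_of_nonneg him.1]
      linarith [hre.2, him.2]
  refine ⟨re_cosTarget_lt hs ht, im_cosTarget_nonpos hs ht him.1, ?_⟩
  calc
    ‖cosTarget s t‖ ≤ 1 + 2 * π * (‖1 + t‖ ^ 2 / (1 + t.re)) := norm_cosTarget_le hs ht
    _ ≤ 1 + 2 * π * (2 + H) ^ 2 := by
      gcongr
      exact (div_le_self (by positivity) (by linarith [hre.1])).trans (by gcongr)
    _ < Real.sinh H := hH

lemma sub_div_mem_reProdIm {a b c H : ℝ} {u : ℂ} (hc : 1 ≤ c) (hu : u ∈ Icc a b ×ℂ Icc 0 H) :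
    (u - a) / c ∈ Icc 0 ((b - a) / c) ×ℂ Icc 0 H := by
  have hc0 : 0 ≤ c := zero_le_one.trans hc
  obtain ⟨⟨hre, hre'⟩, him, him'⟩ := hu
  rw [mem_reProdIm, div_ofReal_re, div_ofReal_im, sub_re, sub_im, ofReal_re, ofReal_im, sub_zero]
  exact ⟨⟨div_nonneg (sub_nonneg.2 hre) hc0, by gcongr⟩, div_nonneg him hc0,
    (div_le_self him hc).trans him'⟩

theorem exists_cos_eq_cosTarget (hs : s ∈ Ioo (0 : ℝ) (1 / 2)) :
    ∃ t : ℂ, t.re ∈ Ioo 0 (1 / 2) ∧ 0 ≤ t.im ∧ cos (π * s + 2 * π * t) = cosTarget s t := by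
  have hs' : s ∈ Ioc (0 : ℝ) (1 / 2) := Ioo_subset_Ioc_self hs
  have ha : π * s ∈ Ioo (-(π / 2)) (π / 2) := by
    constructor <;> nlinarith [hs.1, hs.2, Real.pi_pos]
  have hwidth : (π - π * s) / (2 * π) < 1 / 2 := by
    rw [div_lt_iff₀ Real.two_pi_pos]
    nlinarith [hs.1, Real.pi_pos]
  obtain ⟨H, hH, hmem⟩ := exists_forall_cosTarget_mem_cosQuadrant hs'
  have hcl : closure (Ioo (π * s) π ×ℂ Ioo 0 H) = Icc (π * s) π ×ℂ Icc 0 H := by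
    rw [closure_reProdIm, closure_Ioo (by linarith [ha.2, Real.pi_pos]), closure_Ioo hH.ne]
  set τ : ℂ → ℂ := fun u => (u - (π * s : ℝ)) / (2 * π : ℝ)
  have hτ (u : ℂ) (hu : u ∈ Icc (π * s) π ×ℂ Icc 0 H) :
      τ u ∈ Icc 0 ((π - π * s) / (2 * π)) ×ℂ Icc 0 H :=
    sub_div_mem_reProdIm (by linarith [Real.pi_gt_three]) hu
  have hdiff : DiffContOnCl ℂ (cosTarget s ∘ τ) (Ioo (π * s) π ×ℂ Ioo 0 H) := by
    refine DifferentiableOn.diffContOnCl fun u hu => ?_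
    have ht : -1 < (τ u).re := by linarith [(hτ u (hcl ▸ hu)).1.1]
    exact ((differentiableAt_cosTarget hs' ht).comp u (by fun_prop)).differentiableWithinAt
  obtain ⟨u, hre, him, hcos⟩ := exists_cos_eq_of_forall_mem_cosQuadrant ha hH hdiff fun u hu =>
    have htu := hτ u (hcl ▸ hu)
    hmem (τ u) ⟨htu.1.1, by linarith [htu.1.2]⟩ htu.2
  obtain ⟨⟨-, hre'⟩, him', -⟩ := hτ u ⟨Ioc_subset_Icc_self hre, him⟩
  have hu : π * s + 2 * π * τ u = u := by
    have hπ : (π : ℂ) ≠ 0 := ofReal_ne_zero.2 Real.pi_ne_zero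
    simp only [τ]
    push_cast
    field_simp
    ring
  refine ⟨τ u, ⟨?_, hre'.trans_lt hwidth⟩, him', (congrArg cos hu).trans hcos⟩
  rw [div_ofReal_re, sub_re, ofReal_re]
  exact div_pos (sub_pos.2 hre.1) Real.two_pi_pos

end CosineEquation

theorem gFun_exists_zero_low_s (s : ℝ) (hs : s ∈ Set.Ioo (0 : ℝ) (1/2)) :
    ∃ M > 0, ∃ z : ℂ, z.re ∈ Set.Ioo (2 * s) (2 * s + 1/2) ∧
      z.im ∈ Set.Icc (0 : ℝ) M ∧ AnalyticAt ℂ (gFun s) z ∧ gFun s z = 0 := by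
  obtain ⟨t, ht, him, hcos⟩ := exists_cos_eq_cosTarget hs
  have hsint : (s : ℂ) ∈ integerComplement :=
    mem_integerComplement_of_re_mem_Ioo ⟨hs.1, hs.2.trans one_half_lt_one⟩
  have htint : t ∈ integerComplement :=
    mem_integerComplement_of_re_mem_Ioo ⟨ht.1, ht.2.trans one_half_lt_one⟩
  have hre : (2 * s + t).re = 2 * s + t.re := by simp
  refine ⟨t.im + 1, by linarith, 2 * s + t, ?_, ?_, analyticAt_gFun_two_mul_add htint ?_,
    gFun_two_mul_add_eq_zero hs.1 (by linarith [ht.1]) (sin_pi_mul_ne_zero hsint)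
      (sin_pi_mul_ne_zero htint) hcos⟩
  · simpa using ht
  · simpa using him
  · rw [add_re, hre, one_re]
    linarith [hs.1, ht.1]
end
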